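/- arXiv:2305.08463 — 2 statements merged into one kernel-verified Lean document; each statement's English description precedes it below -/
import Mathlib

section
/- (Linear convergence when θ = 1/2.) Assume Assumptions RS and QM, and let (y_t)_{t∈ℕ} be the mode estimate sequence obtained by the MS iteration starting from y₁ with f(y₁) > 0. Assume that for some τ ∈ ℕ, with S := closure of the convex hull of {y_t : t ≥ τ}: the KDE f is differentiable on S with Lipschitz-continuous gradient on S, and f has the Łojasiewicz property on S; and that y_t converges to ȳ and f satisfies the Łojasiewicz inequality at ȳ with exponent θ = 1/2, i.e. there are ε > 0, c > 0 such that ‖∇f(y)‖ ≥ c·(f(ȳ) − f(y))^{1/2} for all y ∈ S with ‖ȳ − y‖ < ε and f(ȳ) − f(y) ≥ 0. Then there exist constants C > 0 and q ∈ (0,1) such that ‖ȳ − y_t‖ ≤ C·q^t and f(ȳ) − f(y_t) ≤ C·q^{2t} for all t ∈ ℕ. -/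
open Set Filter Topology MeasureTheory
open scoped BigOperators RealInnerProductSpace

noncomputable section

/-- Euclidean space `ℝ^d`. -/
abbrev Euc (d : ℕ) := EuclideanSpace ℝ (Fin d)

/-- The convex subdifferential of a function `g` (viewed as a function on `[0,∞)`) at `u`. -/
def subdiffIci (g : ℝ → ℝ) (u : ℝ) : Set ℝ :=
  {c : ℝ | ∀ v ∈ Set.Ici (0:ℝ), g v - g u ≥ c * (v - u)}

/-- Assumption RS: the kernel `K` is bounded, continuous, non-negative, normalized, and
radially symmetric with profile `Khat`. -/
structure AssumptionRS (d : ℕ) (K : Euc d → ℝ) (Khat : ℝ → ℝ) : Prop where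
  bounded : ∃ M : ℝ, ∀ x, K x ≤ M
  cont : Continuous K
  nonneg : ∀ x, 0 ≤ K x
  normalized : ∫ x, K x = 1
  radial : ∀ x, K x = Khat (‖x‖ ^ 2 / 2)

/-- Assumption QM for the profile `Khat`, together with the selection `Kcheck`:
`Khat` is convex and non-increasing on `[0,∞)`, its right derivative at `0` exists as a real
number and equals `-(Kcheck 0)` (i.e. `Kcheck 0 = -Khat'(0+) > -∞`), and for every `u > 0`,
`-(Kcheck u)` belongs to the subdifferential of `Khat` at `u`. -/
structure AssumptionQM (Khat Kcheck : ℝ → ℝ) : Prop where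
  convexOn : ConvexOn ℝ (Set.Ici (0:ℝ)) Khat
  antitoneOn : AntitoneOn Khat (Set.Ici (0:ℝ))
  rderiv0 : Filter.Tendsto (fun v => (Khat v - Khat 0) / v)
      (nhdsWithin 0 (Set.Ioi 0)) (nhds (-(Kcheck 0)))
  subdiff : ∀ u : ℝ, 0 < u → -(Kcheck u) ∈ subdiffIci Khat u

/-- The kernel density estimate `f(y) = (1/(n hᵈ)) ∑ᵢ K((y - xᵢ)/h)`. -/
def KDE (d n : ℕ) (K : Euc d → ℝ) (x : Fin n → Euc d) (h : ℝ) (y : Euc d) : ℝ :=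
  (1 / ((n : ℝ) * h ^ d)) * ∑ i : Fin n, K (h⁻¹ • (y - x i))

/-- `f̌(y) = (1/(n hᵈ)) ∑ᵢ Ǩ(‖(y - xᵢ)/h‖²/2)`. -/
def fcheck (d n : ℕ) (Kcheck : ℝ → ℝ) (x : Fin n → Euc d) (h : ℝ) (y : Euc d) : ℝ :=
  (1 / ((n : ℝ) * h ^ d)) * ∑ i : Fin n, Kcheck (‖h⁻¹ • (y - x i)‖ ^ 2 / 2)

/-- The mean shift vector `m(y)`: zero if `f̌(y) = 0`, and otherwise
`m(y) = ∑ᵢ Ǩ(‖(y - xᵢ)/h‖²/2)(xᵢ - y) / ∑ᵢ Ǩ(‖(y - xᵢ)/h‖²/2)`. -/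
def msMap (d n : ℕ) (Kcheck : ℝ → ℝ) (x : Fin n → Euc d) (h : ℝ) (y : Euc d) : Euc d :=
  if fcheck d n Kcheck x h y = 0 then 0
  else (∑ i : Fin n, Kcheck (‖h⁻¹ • (y - x i)‖ ^ 2 / 2))⁻¹ •
    ∑ i : Fin n, Kcheck (‖h⁻¹ • (y - x i)‖ ^ 2 / 2) • (x i - y)

/-- `y` is a mean shift iteration sequence: `y (t+1) = y t + m (y t)` for all `t`. -/
def MSSeq (d n : ℕ) (Kcheck : ℝ → ℝ) (x : Fin n → Euc d) (h : ℝ) (y : ℕ → Euc d) : Prop :=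
  ∀ t : ℕ, y (t + 1) = y t + msMap d n Kcheck x h (y t)

/-- `f` has the Łojasiewicz property on the set `S`. -/
def LojasiewiczOn (d : ℕ) (f : Euc d → ℝ) (S : Set (Euc d)) : Prop :=
  ∃ ε > (0:ℝ), ∃ c > (0:ℝ), ∃ θ ∈ Set.Ico (0:ℝ) 1,
    ∀ x' ∈ S, ∀ x ∈ S, ‖x' - x‖ < ε → 0 ≤ f x' - f x →
      ‖gradient f x‖ ≥ c * (f x' - f x) ^ θ

/-- `f` satisfies the Łojasiewicz inequality at `ybar` with exponent `θ`, on the set `S`. -/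
def LojasiewiczAtWith (d : ℕ) (f : Euc d → ℝ) (S : Set (Euc d)) (ybar : Euc d) (θ : ℝ) : Prop :=
  ∃ ε > (0:ℝ), ∃ c > (0:ℝ),
    ∀ y ∈ S, ‖ybar - y‖ < ε → 0 ≤ f ybar - f y →
      ‖gradient f y‖ ≥ c * (f ybar - f y) ^ θ

/-!
Mean shift is a minorize-maximize scheme. Convexity of the profile bounds `f` from below by a
paraboloid that touches `f` at `y t`, has vertex `y (t + 1)` and curvature `f̌ (y t) / h²`.
Maximizing it gives the ascent `b ‖y (t + 1) - y t‖² ≤ f (y (t + 1)) - f (y t)`, and tangency gives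
`∇f (y t) = 2 b (y (t + 1) - y t)`, where `b = f̌ (y t) / (2 h²)`. The Łojasiewicz inequality with
exponent `1/2` says `μ (f ȳ - f (y t)) ≤ ‖∇f (y t)‖²`, so as `b` is bounded the gap `f ȳ - f (y t)`
contracts by a fixed factor. Combined with the ascent it forces `μ ≤ 4 b` whenever the step is
nonzero, so that the squared step is bounded by a multiple of the gap, and the steps decay
geometrically as well.
-/

open Asymptotics

section GeometricDecay

theorem exists_common_bound_of_isBigO {E F : Type*} [SeminormedAddCommGroup E]
    [SeminormedAddCommGroup F] {u : ℕ → E} {v : ℕ → F} {g₁ g₂ : ℕ → ℝ} (hg₁ : ∀ t, 0 < g₁ t)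
    (hg₂ : ∀ t, 0 < g₂ t) (hu : u =O[atTop] g₁) (hv : v =O[atTop] g₂) :
    ∃ C > 0, ∀ t, ‖u t‖ ≤ C * g₁ t ∧ ‖v t‖ ≤ C * g₂ t := by
  obtain ⟨C₁, hC₁, hu⟩ := bound_of_isBigO_nat_atTop hu
  obtain ⟨C₂, -, hv⟩ := bound_of_isBigO_nat_atTop hv
  refine ⟨max C₁ C₂, lt_max_of_lt_left hC₁, fun t => ⟨?_, ?_⟩⟩
  · calc ‖u t‖ ≤ C₁ * g₁ t := by simpa [abs_of_pos (hg₁ t)] using hu (hg₁ t).ne'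
      _ ≤ max C₁ C₂ * g₁ t := mul_le_mul_of_nonneg_right (le_max_left _ _) (hg₁ t).le
  · calc ‖v t‖ ≤ C₂ * g₂ t := by simpa [abs_of_pos (hg₂ t)] using hv (hg₂ t).ne'
      _ ≤ max C₁ C₂ * g₂ t := mul_le_mul_of_nonneg_right (le_max_right _ _) (hg₂ t).le

theorem isBigO_pow_of_eventually_succ_le {r : ℕ → ℝ} {q : ℝ} (hq : 0 < q)
    (hr : ∀ᶠ t in atTop, 0 ≤ r t) (h : ∀ᶠ t in atTop, r (t + 1) ≤ q * r t) :
    r =O[atTop] (q ^ ·) := by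
  obtain ⟨T, hT⟩ := eventually_atTop.1 (hr.and h)
  refine IsBigO.of_bound (r T / q ^ T) (eventually_atTop.2 ⟨T, fun t ht => ?_⟩)
  obtain ⟨k, rfl⟩ := Nat.exists_eq_add_of_le ht
  rw [Real.norm_of_nonneg (hT _ ht).1, Real.norm_of_nonneg (by positivity)]
  calc r (T + k) ≤ q ^ k * r T :=
        le_geom (u := fun j => r (T + j)) hq.le k fun j _ => (hT _ (T.le_add_right j)).2
    _ = r T / q ^ T * q ^ (T + k) := by rw [pow_add]; field_simp

theorem isBigO_dist_limit_of_isBigO_dist_succ {X : Type*} [PseudoMetricSpace X] {y : ℕ → X}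
    {a : X} {q : ℝ} (hq0 : 0 < q) (hq1 : q < 1) (hy : Tendsto y atTop (𝓝 a))
    (h : (fun t => dist (y t) (y (t + 1))) =O[atTop] (q ^ ·)) :
    (fun t => dist (y t) a) =O[atTop] (q ^ ·) := by
  obtain ⟨C, -, hC⟩ := bound_of_isBigO_nat_atTop h
  have hstep (t : ℕ) : dist (y t) (y (t + 1)) ≤ C * q ^ t := by
    simpa [abs_of_pos hq0] using hC (pow_pos hq0 t).ne'
  refine IsBigO.of_bound (C / (1 - q)) (Eventually.of_forall fun t => ?_)
  rw [Real.norm_of_nonneg dist_nonneg, Real.norm_of_nonneg (by positivity), div_mul_eq_mul_div]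
  exact dist_le_of_le_geometric_of_tendsto q C hq1 hstep hy t

theorem isBigO_dist_limit_of_isBigO_dist_succ_sq {X : Type*} [PseudoMetricSpace X] {y : ℕ → X}
    {a : X} {q : ℝ} (hq0 : 0 < q) (hq1 : q < 1) (hy : Tendsto y atTop (𝓝 a))
    (h : (fun t => dist (y t) (y (t + 1)) ^ 2) =O[atTop] fun t => q ^ (2 * t)) :
    (fun t => dist (y t) a) =O[atTop] (q ^ ·) :=
  isBigO_dist_limit_of_isBigO_dist_succ hq0 hq1 hy <|
    IsBigO.of_pow two_ne_zero <| by simpa only [Pi.pow_def, ← pow_mul'] using h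

end GeometricDecay

section QuadraticMinorant

variable {E : Type*} [NormedAddCommGroup E]

/-- The paraboloid with vertex `y + m` and leading coefficient `-b` that agrees with `f` at `y` is a
global lower bound of `f`: the surrogate maximized by one step `y ↦ y + m` of a
minorize-maximize scheme. -/
def HasQuadraticMinorantAt (f : E → ℝ) (b : ℝ) (m y : E) : Prop :=
  ∀ z, f y + b * (‖m‖ ^ 2 - ‖z - y - m‖ ^ 2) ≤ f z

/-- The Polyak–Łojasiewicz inequality at the point `y`, relative to the level `M`. With `M = f ȳ`
it is the Łojasiewicz inequality with exponent `1/2`, squared. -/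
def PolyakLojasiewiczAt [InnerProductSpace ℝ E] [CompleteSpace E] (f : E → ℝ) (M μ : ℝ) (y : E) :
    Prop :=
  μ * (M - f y) ≤ ‖gradient f y‖ ^ 2

namespace HasQuadraticMinorantAt

variable {f : E → ℝ} {b M μ : ℝ} {m y : E}

theorem const_mul (hf : HasQuadraticMinorantAt f b m y) {a : ℝ} (ha : 0 ≤ a) :
    HasQuadraticMinorantAt (fun z => a * f z) (a * b) m y := fun z => by
  linarith [mul_le_mul_of_nonneg_left (hf z) ha]

theorem add_mul_norm_sq_le (hf : HasQuadraticMinorantAt f b m y) :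
    f y + b * ‖m‖ ^ 2 ≤ f (y + m) := by
  simpa using hf (y + m)

theorem le_map_add (hf : HasQuadraticMinorantAt f b m y) (hb : 0 ≤ b) : f y ≤ f (y + m) :=
  (le_add_of_nonneg_right (by positivity)).trans hf.add_mul_norm_sq_le

variable [InnerProductSpace ℝ E]

theorem sum {ι : Type*} {s : Finset ι} {g : ι → E → ℝ} {w : ι → ℝ} {v : ι → E}
    (hg : ∀ i ∈ s, HasQuadraticMinorantAt (g i) (w i) (v i) y)
    (hm : (∑ i ∈ s, w i) • m = ∑ i ∈ s, w i • v i) :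
    HasQuadraticMinorantAt (fun z => ∑ i ∈ s, g i z) (∑ i ∈ s, w i) m y := fun z => by
  have expand (u : E) : ‖u‖ ^ 2 - ‖z - y - u‖ ^ 2 = 2 * ⟪z - y, u⟫ - ‖z - y‖ ^ 2 := by
    rw [norm_sub_sq_real]; ring
  have inner_eq : (∑ i ∈ s, w i) * ⟪z - y, m⟫ = ∑ i ∈ s, w i * ⟪z - y, v i⟫ := by
    simpa only [inner_sum, inner_smul_right] using congrArg (inner ℝ (z - y)) hm
  calc ∑ i ∈ s, g i y + (∑ i ∈ s, w i) * (‖m‖ ^ 2 - ‖z - y - m‖ ^ 2)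
      = ∑ i ∈ s, g i y + 2 * ((∑ i ∈ s, w i) * ⟪z - y, m⟫) - (∑ i ∈ s, w i) * ‖z - y‖ ^ 2 := by
        rw [expand]; ring
    _ = ∑ i ∈ s, (g i y + w i * (‖v i‖ ^ 2 - ‖z - y - v i‖ ^ 2)) := by
        rw [inner_eq, Finset.mul_sum, Finset.sum_mul, ← Finset.sum_add_distrib,
          ← Finset.sum_sub_distrib]
        exact Finset.sum_congr rfl fun i _ => by rw [expand]; ring
    _ ≤ ∑ i ∈ s, g i z := Finset.sum_le_sum fun i hi => hg i hi z

variable [CompleteSpace E]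

theorem gradient_eq (hf : HasQuadraticMinorantAt f b m y) (hd : DifferentiableAt ℝ f y) :
    gradient f y = (2 * b) • m := by
  have hsub : HasFDerivAt (fun z : E => z - y - m) (ContinuousLinearMap.id ℝ E) y :=
    ((hasFDerivAt_id y).sub_const y).sub_const m
  have hmin : IsLocalMin (fun z => f z + b * ‖z - y - m‖ ^ 2) y :=
    Eventually.of_forall fun z => by
      simp only [sub_self, zero_sub, norm_neg]
      linarith [hf z]
  have hzero := hmin.hasFDerivAt_eq_zero
    (hd.hasGradientAt.hasFDerivAt.add (hsub.norm_sq.const_mul b))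
  refine ext_inner_right ℝ fun v => ?_
  have hv : ⟪gradient f y, v⟫ - b * (2 * ⟪m, v⟫) = 0 := by
    simpa [← sub_eq_add_neg] using DFunLike.congr_fun hzero v
  rw [real_inner_smul_left]
  linarith

theorem mul_gap_le (hf : HasQuadraticMinorantAt f b m y) (hd : DifferentiableAt ℝ f y)
    (hPL : PolyakLojasiewiczAt f M μ y) : μ * (M - f y) ≤ 4 * b * (b * ‖m‖ ^ 2) := by
  calc μ * (M - f y) ≤ ‖gradient f y‖ ^ 2 := hPL
    _ = 4 * b * (b * ‖m‖ ^ 2) := by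
      rw [hf.gradient_eq hd, norm_smul, mul_pow, Real.norm_eq_abs, sq_abs]; ring

theorem gap_contraction (hf : HasQuadraticMinorantAt f b m y) (hd : DifferentiableAt ℝ f y)
    (hPL : PolyakLojasiewiczAt f M μ y) {B : ℝ} (hb : 0 ≤ b) (hbB : b ≤ B) (hB : 0 < B) :
    M - f (y + m) ≤ (1 - μ / (4 * B)) * (M - f y) := by
  have : μ / (4 * B) * (M - f y) ≤ b * ‖m‖ ^ 2 := by
    rw [div_mul_eq_mul_div, div_le_iff₀ (by positivity)]
    calc μ * (M - f y) ≤ 4 * b * (b * ‖m‖ ^ 2) := hf.mul_gap_le hd hPL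
      _ ≤ 4 * B * (b * ‖m‖ ^ 2) := by gcongr
      _ = b * ‖m‖ ^ 2 * (4 * B) := mul_comm _ _
  linarith [hf.add_mul_norm_sq_le]

theorem mul_norm_sq_le_gap (hf : HasQuadraticMinorantAt f b m y) (hd : DifferentiableAt ℝ f y)
    (hPL : PolyakLojasiewiczAt f M μ y) (hμ : 0 ≤ μ) (hb : 0 ≤ b) (hbm : b = 0 → m = 0)
    (hM : f (y + m) ≤ M) : μ * ‖m‖ ^ 2 ≤ 4 * (M - f y) := by
  have hascent : b * ‖m‖ ^ 2 ≤ M - f y := by linarith [hf.add_mul_norm_sq_le]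
  rcases hb.eq_or_lt' with rfl | hb
  · simpa [hbm rfl] using hascent
  rcases eq_or_ne m 0 with rfl | hm
  · simpa using hascent
  have hμb : μ ≤ 4 * b := by
    refine le_of_mul_le_mul_right ?_ (show 0 < b * ‖m‖ ^ 2 by positivity)
    exact (mul_le_mul_of_nonneg_left hascent hμ).trans (hf.mul_gap_le hd hPL)
  calc μ * ‖m‖ ^ 2 ≤ 4 * b * ‖m‖ ^ 2 := by gcongr
    _ ≤ 4 * (M - f y) := by linarith

end HasQuadraticMinorantAt

variable [InnerProductSpace ℝ E] [CompleteSpace E]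

theorem exists_linear_rate_of_hasQuadraticMinorantAt {f : E → ℝ} {M μ : ℝ} {b : ℕ → ℝ}
    {y : ℕ → E} {a : E} (hy : Tendsto y atTop (𝓝 a))
    (hmin : ∀ t, HasQuadraticMinorantAt f (b t) (y (t + 1) - y t) (y t))
    (hb : ∀ t, 0 ≤ b t) (hb_bdd : BddAbove (range b)) (hb_zero : ∀ t, b t = 0 → y (t + 1) = y t)
    (hM : ∀ t, f (y t) ≤ M) (hd : ∀ᶠ t in atTop, DifferentiableAt ℝ f (y t)) (hμ : 0 < μ)
    (hPL : ∀ᶠ t in atTop, PolyakLojasiewiczAt f M μ (y t)) :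
    ∃ q ∈ Ioo (0 : ℝ) 1, (fun t => dist (y t) a) =O[atTop] (q ^ ·) ∧
      (fun t => M - f (y t)) =O[atTop] fun t => q ^ (2 * t) := by
  have hgap (t : ℕ) : 0 ≤ M - f (y t) := sub_nonneg.2 (hM t)
  obtain ⟨ρ, hρ0, hρ1, hcontract⟩ : ∃ ρ > 0, ρ < 1 ∧
      ∀ᶠ t in atTop, M - f (y (t + 1)) ≤ ρ * (M - f (y t)) := by
    obtain ⟨B, hB, hbB⟩ := hb_bdd.exists_ge 1
    have hB0 : 0 < B := one_pos.trans_le hB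
    -- The contraction factor `1 - μ / (4 * B)` may be nonpositive, hence the maximum.
    refine ⟨max (1 - μ / (4 * B)) (1 / 2), by positivity,
      max_lt (sub_lt_self 1 (by positivity)) one_half_lt_one, ?_⟩
    filter_upwards [hd, hPL] with t hdt hPLt
    have := (hmin t).gap_contraction hdt hPLt (hb t) (hbB _ (mem_range_self t)) hB0
    rw [add_sub_cancel] at this
    exact this.trans (mul_le_mul_of_nonneg_right (le_max_left _ _) (hgap t))
  have hq0 : 0 < √ρ := Real.sqrt_pos.2 hρ0
  have hq1 : √ρ < 1 := (Real.sqrt_lt' one_pos).2 (by simpa using hρ1)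
  have hvalues : (fun t => M - f (y t)) =O[atTop] fun t => √ρ ^ (2 * t) := by
    simpa only [pow_mul, Real.sq_sqrt hρ0.le] using
      isBigO_pow_of_eventually_succ_le hρ0 (Eventually.of_forall hgap) hcontract
  have hsteps : (fun t => dist (y t) (y (t + 1)) ^ 2) =O[atTop] fun t => M - f (y t) := by
    refine IsBigO.of_bound (4 / μ) ?_
    filter_upwards [hd, hPL] with t hdt hPLt
    have := (hmin t).mul_norm_sq_le_gap hdt hPLt hμ.le (hb t)
      (fun h => sub_eq_zero.2 (hb_zero t h)) (by simpa using hM (t + 1))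
    rwa [Real.norm_of_nonneg (by positivity), Real.norm_of_nonneg (hgap t), dist_eq_norm',
      div_mul_eq_mul_div, le_div_iff₀' hμ]
  exact ⟨√ρ, ⟨hq0, hq1⟩,
    isBigO_dist_limit_of_isBigO_dist_succ_sq hq0 hq1 hy (hsteps.trans hvalues), hvalues⟩

theorem exists_polyakLojasiewiczAt_of_lojasiewiczAtWith {ι : Type*} {l : Filter ι} {d : ℕ}
    {f : Euc d → ℝ} {S : Set (Euc d)} {ybar : Euc d} {y : ι → Euc d}
    (h : LojasiewiczAtWith d f S ybar (1 / 2)) (hy : Tendsto y l (𝓝 ybar))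
    (hS : ∀ᶠ t in l, y t ∈ S) (hle : ∀ᶠ t in l, f (y t) ≤ f ybar) :
    ∃ μ > 0, ∀ᶠ t in l, PolyakLojasiewiczAt f (f ybar) μ (y t) := by
  obtain ⟨ε, hε, c, hc, hL⟩ := h
  refine ⟨c ^ 2, by positivity, ?_⟩
  filter_upwards [hS, hle, hy.eventually (Metric.ball_mem_nhds ybar hε)] with t hSt hlet hball
  have hgap : 0 ≤ f ybar - f (y t) := sub_nonneg.2 hlet
  have := hL (y t) hSt (by rwa [← dist_eq_norm']) hgap
  rw [← Real.sqrt_eq_rpow] at this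
  calc c ^ 2 * (f ybar - f (y t)) = (c * √(f ybar - f (y t))) ^ 2 := by
        rw [mul_pow, Real.sq_sqrt hgap]
    _ ≤ ‖gradient f (y t)‖ ^ 2 := by gcongr

end QuadraticMinorant

namespace AssumptionQM

variable {Khat Kcheck : ℝ → ℝ}

theorem neg_kcheck_mem_subdiffIci (hQM : AssumptionQM Khat Kcheck) {u : ℝ} (hu : 0 ≤ u) :
    -(Kcheck u) ∈ subdiffIci Khat u := by
  rcases hu.eq_or_lt with rfl | hu
  · rintro v (hv : 0 ≤ v)
    rcases hv.eq_or_lt with rfl | hv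
    · simp
    have hslope : -(Kcheck 0) ≤ (Khat v - Khat 0) / v := by
      refine le_of_tendsto hQM.rderiv0 ?_
      filter_upwards [Ioo_mem_nhdsGT hv] with w hw
      simpa using hQM.convexOn.secant_mono self_mem_Ici hw.1.le hv.le hw.1.ne' hv.ne' hw.2.le
    simpa using (le_div_iff₀ hv).1 hslope
  · exact hQM.subdiff u hu

theorem kcheck_nonneg (hQM : AssumptionQM Khat Kcheck) {u : ℝ} (hu : 0 ≤ u) : 0 ≤ Kcheck u := by
  have hu' : 0 ≤ u + 1 := by positivity
  have hsub := hQM.neg_kcheck_mem_subdiffIci hu (u + 1) hu'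
  have hanti := hQM.antitoneOn hu hu' (le_add_of_nonneg_right zero_le_one)
  linarith

theorem kcheck_antitoneOn (hQM : AssumptionQM Khat Kcheck) : AntitoneOn Kcheck (Ici 0) := by
  intro u hu v hv huv
  rcases huv.eq_or_lt with rfl | huv
  · rfl
  have hsub_u := hQM.neg_kcheck_mem_subdiffIci hu v hv
  have hsub_v := hQM.neg_kcheck_mem_subdiffIci hv u hu
  refine le_of_mul_le_mul_right ?_ (sub_pos.2 huv)
  linarith

theorem lipschitzOnWith (hQM : AssumptionQM Khat Kcheck) :
    LipschitzOnWith (Kcheck 0).toNNReal Khat (Ici 0) := by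
  refine LipschitzOnWith.of_le_add_mul' _ fun u (hu : 0 ≤ u) v hv => ?_
  have hsub : Khat v - Khat u ≥ -(Kcheck u) * (v - u) := hQM.neg_kcheck_mem_subdiffIci hu v hv
  calc Khat u ≤ Khat v + Kcheck u * (v - u) := by linarith
    _ ≤ Khat v + Kcheck u * dist u v := by
      rw [dist_comm, Real.dist_eq]
      have := hQM.kcheck_nonneg hu
      gcongr
      exact le_abs_self _
    _ ≤ Khat v + Kcheck 0 * dist u v := by
      gcongr
      exact hQM.kcheck_antitoneOn self_mem_Ici hu hu

end AssumptionQM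

theorem hasQuadraticMinorantAt_comp_norm_sq {E : Type*} [NormedAddCommGroup E]
    [InnerProductSpace ℝ E] {g : ℝ → ℝ} {k h : ℝ} {p y : E}
    (hk : -k ∈ subdiffIci g (‖h⁻¹ • (y - p)‖ ^ 2 / 2)) :
    HasQuadraticMinorantAt (fun z => g (‖h⁻¹ • (z - p)‖ ^ 2 / 2)) (k / (2 * h ^ 2)) (p - y) y := by
  intro z
  have hsub := hk (‖h⁻¹ • (z - p)‖ ^ 2 / 2) (by simp only [mem_Ici]; positivity)
  have hscale (u : E) : ‖h⁻¹ • u‖ ^ 2 = ‖u‖ ^ 2 / h ^ 2 := by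
    rw [norm_smul, mul_pow, Real.norm_eq_abs, sq_abs, inv_pow, inv_mul_eq_div]
  simp only [sub_sub_sub_cancel_right, norm_sub_rev p y, hscale] at hsub ⊢
  linear_combination hsub

section MeanShift

variable {d n : ℕ} {K : Euc d → ℝ} {Khat Kcheck : ℝ → ℝ} {x : Fin n → Euc d} {h : ℝ}

theorem AssumptionQM.continuous_KDE (hQM : AssumptionQM Khat Kcheck)
    (hK : ∀ u, K u = Khat (‖u‖ ^ 2 / 2)) : Continuous (KDE d n K x h) := by
  have hcont : Continuous K := by
    rw [funext hK]
    exact hQM.lipschitzOnWith.continuousOn.comp_continuous (by fun_prop)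
      fun u => by simp only [mem_Ici]; positivity
  unfold KDE
  fun_prop

theorem AssumptionQM.fcheck_nonneg (hQM : AssumptionQM Khat Kcheck) (hh : 0 < h) (y : Euc d) :
    0 ≤ fcheck d n Kcheck x h y :=
  mul_nonneg (by positivity) (Finset.sum_nonneg fun _ _ => hQM.kcheck_nonneg (by positivity))

theorem AssumptionQM.fcheck_le (hQM : AssumptionQM Khat Kcheck) (hh : 0 < h) (y : Euc d) :
    fcheck d n Kcheck x h y ≤ 1 / (n * h ^ d) * (n * Kcheck 0) := by
  refine mul_le_mul_of_nonneg_left ?_ (by positivity)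
  have hle (i : Fin n) : Kcheck (‖h⁻¹ • (y - x i)‖ ^ 2 / 2) ≤ Kcheck 0 :=
    hQM.kcheck_antitoneOn self_mem_Ici (mem_Ici.2 (by positivity)) (by positivity)
  simpa using Finset.sum_le_card_nsmul Finset.univ _ _ fun i _ => hle i

theorem AssumptionQM.sum_smul_msMap (hQM : AssumptionQM Khat Kcheck) (hn : 0 < n) (hh : 0 < h)
    (y : Euc d) :
    (∑ i, Kcheck (‖h⁻¹ • (y - x i)‖ ^ 2 / 2)) • msMap d n Kcheck x h y =
      ∑ i, Kcheck (‖h⁻¹ • (y - x i)‖ ^ 2 / 2) • (x i - y) := by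
  rcases eq_or_ne (∑ i, Kcheck (‖h⁻¹ • (y - x i)‖ ^ 2 / 2)) 0 with hW | hW
  · have hzero := (Finset.sum_eq_zero_iff_of_nonneg fun i _ =>
      hQM.kcheck_nonneg (by positivity)).1 hW
    rw [hW, zero_smul, Finset.sum_eq_zero fun i hi => by rw [hzero i hi, zero_smul]]
  · have hf : fcheck d n Kcheck x h y ≠ 0 := mul_ne_zero (by positivity) hW
    rw [msMap, if_neg hf, smul_inv_smul₀ hW]

theorem AssumptionQM.hasQuadraticMinorantAt_KDE (hQM : AssumptionQM Khat Kcheck)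
    (hK : ∀ u, K u = Khat (‖u‖ ^ 2 / 2)) (hn : 0 < n) (hh : 0 < h) (y : Euc d) :
    HasQuadraticMinorantAt (KDE d n K x h) (fcheck d n Kcheck x h y / (2 * h ^ 2))
      (msMap d n Kcheck x h y) y := by
  have hterm (i : Fin n) : HasQuadraticMinorantAt (fun z => K (h⁻¹ • (z - x i)))
      (Kcheck (‖h⁻¹ • (y - x i)‖ ^ 2 / 2) / (2 * h ^ 2)) (x i - y) y := by
    simp only [hK]
    exact hasQuadraticMinorantAt_comp_norm_sq (hQM.neg_kcheck_mem_subdiffIci (by positivity))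
  have hvertex : (∑ i, Kcheck (‖h⁻¹ • (y - x i)‖ ^ 2 / 2) / (2 * h ^ 2)) • msMap d n Kcheck x h y =
      ∑ i, (Kcheck (‖h⁻¹ • (y - x i)‖ ^ 2 / 2) / (2 * h ^ 2)) • (x i - y) := by
    simp only [div_eq_inv_mul _ (2 * h ^ 2), ← Finset.mul_sum, mul_smul, ← Finset.smul_sum,
      hQM.sum_smul_msMap hn hh y]
  have hsum := (HasQuadraticMinorantAt.sum (fun i _ => hterm i) hvertex).const_mul
    (show 0 ≤ 1 / ((n : ℝ) * h ^ d) by positivity)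
  rwa [← Finset.sum_div, ← mul_div_assoc] at hsum

end MeanShift

theorem ms_linear_convergence_general
    (d n : ℕ) (hn : 0 < n)
    (K : Euc d → ℝ) (Khat Kcheck : ℝ → ℝ)
    (hK : ∀ u, K u = Khat (‖u‖ ^ 2 / 2)) (hQM : AssumptionQM Khat Kcheck)
    (x : Fin n → Euc d) (h : ℝ) (hh : 0 < h)
    (y : ℕ → Euc d) (hy : MSSeq d n Kcheck x h y)
    (S : Set (Euc d)) (hyS : ∀ᶠ t in atTop, y t ∈ S)
    (hdiff : ∀ z ∈ S, DifferentiableAt ℝ (KDE d n K x h) z)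
    (ybar : Euc d) (hconv : Tendsto y atTop (𝓝 ybar))
    (hloja : LojasiewiczAtWith d (KDE d n K x h) S ybar (1 / 2)) :
    ∃ C : ℝ, 0 < C ∧ ∃ q ∈ Ioo (0 : ℝ) 1, ∀ t : ℕ,
      ‖ybar - y t‖ ≤ C * q ^ t ∧
      KDE d n K x h ybar - KDE d n K x h (y t) ≤ C * q ^ (2 * t) := by
  have hstep (t : ℕ) : msMap d n Kcheck x h (y t) = y (t + 1) - y t := by rw [hy t]; abel
  set b : ℕ → ℝ := fun t => fcheck d n Kcheck x h (y t) / (2 * h ^ 2)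
  have hmin (t : ℕ) : HasQuadraticMinorantAt (KDE d n K x h) (b t) (y (t + 1) - y t) (y t) :=
    hstep t ▸ hQM.hasQuadraticMinorantAt_KDE hK hn hh (y t)
  have hb (t : ℕ) : 0 ≤ b t := div_nonneg (hQM.fcheck_nonneg hh _) (by positivity)
  have hb_bdd : BddAbove (range b) := ⟨_, forall_mem_range.2 fun t =>
    div_le_div_of_nonneg_right (hQM.fcheck_le hh (y t)) (by positivity)⟩
  have hb_zero (t : ℕ) (ht : b t = 0) : y (t + 1) = y t := by
    have hf : fcheck d n Kcheck x h (y t) = 0 :=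
      (div_eq_zero_iff.1 ht).resolve_right (by positivity)
    rw [hy t, msMap, if_pos hf, add_zero]
  have hmono : Monotone fun t => KDE d n K x h (y t) :=
    monotone_nat_of_le_succ fun t => by simpa using (hmin t).le_map_add (hb t)
  have hle : ∀ t, KDE d n K x h (y t) ≤ KDE d n K x h ybar :=
    hmono.ge_of_tendsto (((hQM.continuous_KDE hK).tendsto ybar).comp hconv)
  obtain ⟨μ, hμ, hPL⟩ := exists_polyakLojasiewiczAt_of_lojasiewiczAtWith hloja hconv hyS
    (Eventually.of_forall hle)
  obtain ⟨q, hq, hdist, hgap⟩ := exists_linear_rate_of_hasQuadraticMinorantAt hconv hmin hb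
    hb_bdd hb_zero hle (hyS.mono fun t => hdiff (y t)) hμ hPL
  obtain ⟨C, hC, hbound⟩ := exists_common_bound_of_isBigO (pow_pos hq.1)
    (fun t => pow_pos hq.1 (2 * t)) hdist hgap
  refine ⟨C, hC, q, hq, fun t => ⟨?_, (le_abs_self _).trans (hbound t).2⟩⟩
  simpa only [norm_norm, dist_eq_norm'] using (hbound t).1

/-- Linear convergence when `θ = 1/2`: under the assumptions of the convergence
theorem, if moreover `y t → ȳ` and `f` satisfies the Łojasiewicz inequality at `ȳ` with
exponent `θ = 1/2`, then there are `C > 0` and `q ∈ (0,1)` with `‖ȳ − y t‖ ≤ C qᵗ` and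
`f(ȳ) − f(y t) ≤ C q^{2t}` for all `t`. -/
theorem ms_linear_convergence
    (d n : ℕ) (hd : 0 < d) (hn : 0 < n)
    (K : Euc d → ℝ) (Khat Kcheck : ℝ → ℝ)
    (hRS : AssumptionRS d K Khat) (hQM : AssumptionQM Khat Kcheck)
    (x : Fin n → Euc d) (h : ℝ) (hh : 0 < h)
    (y : ℕ → Euc d) (hy : MSSeq d n Kcheck x h y)
    (hy0 : 0 < KDE d n K x h (y 0))
    (τ : ℕ) (S : Set (Euc d))
    (hS : S = closure (convexHull ℝ {z : Euc d | ∃ t : ℕ, τ ≤ t ∧ z = y t}))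
    (ha1diff : ∀ z ∈ S, DifferentiableAt ℝ (KDE d n K x h) z)
    (ha1lip : ∃ L : NNReal, LipschitzOnWith L (gradient (KDE d n K x h)) S)
    (ha2 : LojasiewiczOn d (KDE d n K x h) S)
    (ybar : Euc d) (hconv : Filter.Tendsto y Filter.atTop (nhds ybar))
    (hloja : LojasiewiczAtWith d (KDE d n K x h) S ybar (1/2)) :
    ∃ C : ℝ, 0 < C ∧ ∃ q ∈ Set.Ioo (0:ℝ) 1, ∀ t : ℕ,
      ‖ybar - y t‖ ≤ C * q ^ t ∧
      KDE d n K x h ybar - KDE d n K x h (y t) ≤ C * q ^ (2 * t) :=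
  ms_linear_convergence_general d n hn K Khat Kcheck hRS.radial hQM x h hh y hy S
    (eventually_atTop.2 ⟨τ, fun t ht => hS ▸ subset_closure (subset_convexHull ℝ _ ⟨t, ht, rfl⟩)⟩)
    ha1diff ybar hconv hloja
end
end

section
/- (Bound of the Łojasiewicz exponent for piecewise polynomial kernels.) Assume the kernel K : ℝ^d → ℝ is of class C¹ and piecewise polynomial with maximum degree k ≥ 2: there is a finite partition {S_l}_{l=1}^L of ℝ^d into nonempty, pairwise disjoint sets and polynomial functions p_l : ℝ^d → ℝ of degree ≤ k (with degree k attained by some p_l) such that K = p_l on S_l. Let f(x) = (1/(n h^d)) Σ_{i=1}^n K((x − x_i)/h) be the KDE, let ȳ be a critical point of f (∇f(ȳ) = 0), and write {T_m}_{m=1}^M for a finite partition of ℝ^d and polynomials f_m with f = f_m on T_m; assume that for every m such that T_m intersects the ε-neighborhood of ȳ for every ε > 0, the polynomial f_m is non-constant. Then, with θ := 1 − 1/max{k(3k−4)^{d−1}, 2k(3k−3)^{d−2}}, there exist c > 0 and ε > 0 such that ‖∇f(y)‖ ≥ c·(f(ȳ) − f(y))^θ for all y with ‖ȳ − y‖ <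 ε and f(ȳ) − f(y) ≥ 0; i.e., the Łojasiewicz exponent of f at ȳ is at most θ. -/
open Set Filter Topology MeasureTheory
open scoped BigOperators RealInnerProductSpace

noncomputable section

/-! By Baire's theorem the closures of the interiors of the finitely many sets `{F = p}` cover the
space, and on such a closure the gradient of the `C¹` function `F` is that of the polynomial `p`;
so it suffices to bound the exponent of one polynomial `f` of degree at most `k`.

If the inequality failed for `f`, there would be a finite hyperreal point `x` at which `f` is a
positive infinitesimal and `|∇f|²` is too small compared with it. When some coordinate of such a
point is real, restrict `f` to fewer variables. Otherwise `x` may be replaced by an extremal point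
of `τ f - |∇f|²` for a suitable infinitesimal `τ`, perturbed by a linear form whose coefficients
live on infinitesimal scales that are independent of each other and of `τ`. Its coordinates then
solve a polynomial system over `ℝ(τ)` with independent right-hand sides, and a dimension count in
the spirit of Bézout bounds the ramification over `ℝ(τ)` of the field they generate by the product
of the degrees. (In two variables it is enough that `x` lies on the curve where `∇f` and `∇|∇f|²`
are parallel.) So that field has a uniformizer `π`, every order is a bounded multiple of the order
of `π`, and differentiating `f` along the expansion of `x` in powers of `π` shows that
`|∇f|²` has order at most `2 a - 2` when `f` has order `a`, contradicting the choice of `x`.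
-/

section AlgebraicRelations

open MvPolynomial

theorem exists_mul_shift_lt_of_polynomial_growth {a : ℕ → ℕ} {n : ℕ} (ha₀ : 0 < a 0)
    (ha : ∀ m, a m ≤ (m + 1) ^ n) {N : ℕ} (hN : 0 < N) (c : ℕ) :
    ∃ m, N * a (m + c) < (N + 1) * a m := by
  by_contra! hcon
  have hN' : (0 : ℝ) < N := by exact_mod_cast hN
  obtain ⟨r, hr⟩ : ∃ r : ℝ, r = (N + 1) / N := ⟨_, rfl⟩
  have hr₁ : 1 < r := by rw [hr, lt_div_iff₀ hN']; linarith
  have exponential_growth (i : ℕ) : r ^ i ≤ a (c * i) := by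
    induction i with
    | zero => simpa using Nat.one_le_iff_ne_zero.2 ha₀.ne'
    | succ i ih =>
      have hstep : ((N : ℝ) + 1) * a (c * i) ≤ N * a (c * i + c) := by
        exact_mod_cast hcon (c * i)
      calc r ^ (i + 1) ≤ a (c * i) * r := by rw [pow_succ]; gcongr
        _ ≤ a (c * (i + 1)) := by
          rw [hr, mul_div_assoc', div_le_iff₀ hN', mul_add_one c i]
          linarith
  have hlim := (tendsto_pow_const_div_const_pow_of_one_lt n hr₁).const_mul (((c : ℝ) + 1) ^ n)
  rw [mul_zero] at hlim
  obtain ⟨i, hi, hi₁⟩ := ((hlim.eventually_lt_const one_pos).and (eventually_ge_atTop 1)).exists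
  rw [mul_div_assoc', div_lt_one (by positivity)] at hi
  refine (exponential_growth i).not_gt (lt_of_le_of_lt ?_ hi)
  calc (a (c * i) : ℝ) ≤ ((c * i : ℕ) + 1 : ℝ) ^ n := by exact_mod_cast ha (c * i)
    _ ≤ ((c + 1) * i : ℝ) ^ n := by
      gcongr
      push_cast
      nlinarith [show (1 : ℝ) ≤ i by exact_mod_cast hi₁]
    _ = _ := mul_pow ..

theorem finrank_restrictTotalDegree (σ R : Type*) [CommRing R] [Nontrivial R] (m : ℕ) :
    Module.finrank R (restrictTotalDegree σ R m) = {β : σ →₀ ℕ | β.degree ≤ m}.ncard := by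
  rw [restrictTotalDegree, Module.finrank_eq_nat_card_basis (basisRestrictSupport R _)]
  rfl

variable {σ : Type*} [Fintype σ] {D : σ → ℕ}

theorem ncard_weight_le_le (hD : ∀ j, 0 < D j) (m : ℕ) :
    {α : σ →₀ ℕ | Finsupp.weight D α ≤ m}.ncard ≤ (m + 1) ^ Fintype.card σ := by
  classical
  have hcard : (m + 1) ^ Fintype.card σ =
      (Fintype.piFinset fun _ : σ => Finset.range (m + 1) : Set (σ → ℕ)).ncard := by
    rw [Set.ncard_coe_finset]; simp
  rw [hcard]
  refine Set.ncard_le_ncard_of_injOn (fun α => ⇑α) (fun α hα => ?_) DFunLike.coe_injective.injOn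
    (Finset.finite_toSet _)
  simpa [Nat.lt_succ_iff] using fun j => (Finsupp.le_weight D (hD j).ne' α).trans hα

/-- Division with remainder by `D` in each coordinate is injective on exponent vectors. -/
theorem ncard_degree_le_le (hD : ∀ j, 0 < D j) (m : ℕ) :
    {β : σ →₀ ℕ | β.degree ≤ m}.ncard ≤
      (∏ j, D j) * {α : σ →₀ ℕ | Finsupp.weight D α ≤ m}.ncard := by
  classical
  have hcard : ∏ j, D j =
      (Fintype.piFinset fun j : σ => Finset.range (D j) : Set (σ → ℕ)).ncard := by
    rw [Set.ncard_coe_finset]; simp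
  rw [hcard, ← Set.ncard_prod]
  refine Set.ncard_le_ncard_of_injOn
    (fun β => (fun j => β j % D j, Finsupp.equivFunOnFinite.symm fun j => β j / D j))
    (fun β hβ => ⟨by simpa using fun j => Nat.mod_lt _ (hD j), ?_⟩) (fun β _ β' _ h => ?_)
    ((Finset.finite_toSet _).prod (Finsupp.finite_of_nat_weight_le D (fun j => (hD j).ne') m))
  · refine le_trans ?_ (show β.degree ≤ m from hβ)
    simp only [Finsupp.weight_eq_sum, Finsupp.degree_eq_sum, smul_eq_mul,
      Finsupp.equivFunOnFinite_symm_apply_apply]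
    exact Finset.sum_le_sum fun j _ => Nat.div_mul_le_self _ _
  · simp only [Prod.mk.injEq, EmbeddingLike.apply_eq_iff_eq] at h
    ext j
    rw [← Nat.div_add_mod (β j) (D j), ← Nat.div_add_mod (β' j) (D j), congrFun h.1 j,
      congrFun h.2 j]

variable {R : Type*} [CommRing R]

theorem totalDegree_pow_mul_pow_mul_prod_le {F : σ → MvPolynomial σ R}
    (hF : ∀ j, (F j).totalDegree ≤ D j) (g h : MvPolynomial σ R) {j N : ℕ} (hj : j ≤ N)
    (α : σ →₀ ℕ) :
    (g ^ j * h ^ (N - j) * ∏ i, F i ^ α i).totalDegree ≤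
      Finsupp.weight D α + N * max g.totalDegree h.totalDegree := by
  have hprod : (∏ i, F i ^ α i).totalDegree ≤ Finsupp.weight D α := by
    rw [Finsupp.weight_eq_sum]
    exact (totalDegree_finsetProd _ _).trans (Finset.sum_le_sum fun i _ =>
      (totalDegree_pow _ _).trans (Nat.mul_le_mul_left _ (hF i)))
  have hpow : (g ^ j * h ^ (N - j)).totalDegree ≤ N * max g.totalDegree h.totalDegree := by
    calc (g ^ j * h ^ (N - j)).totalDegree
        ≤ j * g.totalDegree + (N - j) * h.totalDegree :=
          (totalDegree_mul _ _).trans (add_le_add (totalDegree_pow _ _) (totalDegree_pow _ _))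
      _ ≤ j * max g.totalDegree h.totalDegree + (N - j) * max g.totalDegree h.totalDegree := by
          gcongr <;> simp
      _ = N * max g.totalDegree h.totalDegree := by rw [← add_mul, Nat.add_sub_cancel' hj]
  linarith [totalDegree_mul (g ^ j * h ^ (N - j)) (∏ i, F i ^ α i)]

/-- There are `(N + 1) / N` times as many of these polynomials as there is room for: by division
with remainder, exponents of weighted degree at most `m` make up a fraction at least `1 / N` of
those of degree at most `m`, with `N = ∏ j, D j`. -/
theorem not_linearIndependent_pow_mul_pow_mul_prod [Nontrivial R] (hD : ∀ j, 0 < D j)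
    {F : σ → MvPolynomial σ R} (hF : ∀ j, (F j).totalDegree ≤ D j) (g h : MvPolynomial σ R) :
    ¬ LinearIndependent R fun i : Fin (∏ j, D j + 1) × (σ →₀ ℕ) =>
      g ^ (i.1 : ℕ) * h ^ (∏ j, D j - i.1) * ∏ l, F l ^ i.2 l := by
  intro hli
  obtain ⟨m, hm⟩ := exists_mul_shift_lt_of_polynomial_growth
    (a := fun m => {α : σ →₀ ℕ | Finsupp.weight D α ≤ m}.ncard)
    ((Set.ncard_pos (Finsupp.finite_of_nat_weight_le D (fun j => (hD j).ne') 0)).2 ⟨0, by simp⟩)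
    (ncard_weight_le_le hD) (N := ∏ j, D j) (Finset.prod_pos fun j _ => hD j)
    ((∏ j, D j) * max g.totalDegree h.totalDegree)
  set d := (∏ j, D j) * max g.totalDegree h.totalDegree
  have hfin := Finsupp.finite_of_nat_weight_le D (fun j => (hD j).ne') m
  have : Fintype {α : σ →₀ ℕ | Finsupp.weight D α ≤ m} := hfin.fintype
  let w : Fin (∏ j, D j + 1) × {α : σ →₀ ℕ | Finsupp.weight D α ≤ m} →
      restrictTotalDegree σ R (m + d) := fun i =>
    ⟨g ^ (i.1 : ℕ) * h ^ (∏ j, D j - i.1) * ∏ l, F l ^ (i.2 : σ →₀ ℕ) l,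
      (mem_restrictTotalDegree _ _ _).2 ((totalDegree_pow_mul_pow_mul_prod_le hF g h
        (Nat.lt_succ_iff.1 i.1.2) i.2.1).trans (by gcongr; exact i.2.2))⟩
  have hw : LinearIndependent R w := by
    refine LinearIndependent.of_comp (restrictTotalDegree σ R (m + d)).subtype ?_
    exact hli.comp (Prod.map id Subtype.val) (Function.injective_id.prodMap Subtype.val_injective)
  have : Finite {n : σ →₀ ℕ | (n.sum fun _ e => e) ≤ m + d} := by
    have := Finsupp.finite_of_nat_weight_le (fun _ : σ => 1) (fun _ => one_ne_zero) (m + d)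
    rwa [← Finsupp.degree_eq_weight_one] at this
  have : Module.Finite R (restrictTotalDegree σ R (m + d)) :=
    .of_basis (basisRestrictSupport R _)
  have hle := hw.fintype_card_le_finrank
  rw [Fintype.card_prod, Fintype.card_fin, finrank_restrictTotalDegree, ← Nat.card_eq_fintype_card,
    Nat.card_coe_set_eq] at hle
  exact absurd (hle.trans (ncard_degree_le_le hD (m + d))) (by simpa using hm)

end AlgebraicRelations

section ValueGroup

open ArchimedeanClass

/-- The value group of the natural valuation `ArchimedeanClass.mk` on an ordered field. -/
abbrev ArchValueGroup (K : Type*) [Field K] [LinearOrder K] [IsStrictOrderedRing K] :=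
  AddUnits (ArchimedeanClass K)

variable {K : Type*} [Field K] [LinearOrder K] [IsStrictOrderedRing K]

open Classical in
/-- The natural valuation of an ordered field with values in an honest ordered group, at the price
of the junk value `0` at `0`. -/
def archVal (x : K) : ArchValueGroup K :=
  if hx : x = 0 then 0
  else (LinearOrderedAddCommGroupWithTop.isAddUnit_iff.2 (mk_eq_top_iff.not.2 hx)).addUnit

theorem coe_archVal {x : K} (hx : x ≠ 0) : (archVal x : ArchimedeanClass K) = mk x := by
  simp [archVal, hx]

theorem archVal_mul {x y : K} (hx : x ≠ 0) (hy : y ≠ 0) :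
    archVal (x * y) = archVal x + archVal y := by
  ext
  simp [coe_archVal, hx, hy]

theorem archVal_pow {x : K} (hx : x ≠ 0) (n : ℕ) : archVal (x ^ n) = n • archVal x := by
  ext
  simp [coe_archVal, hx]

theorem archVal_inv {x : K} (hx : x ≠ 0) : archVal x⁻¹ = -archVal x := by
  rw [eq_neg_iff_add_eq_zero, ← archVal_mul (inv_ne_zero hx) hx, inv_mul_cancel₀ hx]
  ext
  simp [coe_archVal]

theorem archVal_prod {ι : Type*} {s : Finset ι} {a : ι → K} (ha : ∀ i ∈ s, a i ≠ 0) :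
    archVal (∏ i ∈ s, a i) = ∑ i ∈ s, archVal (a i) := by
  classical
  induction s using Finset.induction_on with
  | empty => ext; simp [coe_archVal]
  | insert i s hi ih =>
    rw [Finset.forall_mem_insert] at ha
    rw [Finset.prod_insert hi, Finset.sum_insert hi,
      archVal_mul ha.1 (Finset.prod_ne_zero_iff.2 ha.2), ih ha.2]

theorem archVal_eq_archVal {x y : K} (hx : x ≠ 0) (hy : y ≠ 0) :
    archVal x = archVal y ↔ mk x = mk y := by
  rw [← AddUnits.val_inj, coe_archVal hx, coe_archVal hy]

theorem archVal_le_archVal {x y : K} (hx : x ≠ 0) (hy : y ≠ 0) :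
    archVal x ≤ archVal y ↔ mk x ≤ mk y := by
  rw [← AddUnits.val_le_val, coe_archVal hx, coe_archVal hy]

theorem archVal_lt_archVal {x y : K} (hx : x ≠ 0) (hy : y ≠ 0) :
    archVal x < archVal y ↔ mk x < mk y := by
  rw [← AddUnits.val_lt_val, coe_archVal hx, coe_archVal hy]

theorem archVal_one : archVal (1 : K) = 0 := by
  ext
  simp [coe_archVal]

theorem archVal_pos {x : K} (hx : x ≠ 0) : 0 < archVal x ↔ 0 < mk x := by
  rw [← archVal_one, archVal_lt_archVal one_ne_zero hx, mk_one]

theorem exists_ne_mk_eq_of_sum_eq_zero {ι : Type*} {s : Finset ι} {a : ι → K}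
    (hsum : ∑ i ∈ s, a i = 0) (hne : ∃ i ∈ s, a i ≠ 0) :
    ∃ i ∈ s, ∃ j ∈ s, i ≠ j ∧ a i ≠ 0 ∧ a j ≠ 0 ∧ mk (a i) = mk (a j) := by
  classical
  obtain ⟨i₀, hi₀, ha₀⟩ := hne
  obtain ⟨i, hi, hmin⟩ := Finset.exists_min_image s (fun i => mk (a i)) ⟨i₀, hi₀⟩
  have hai : a i ≠ 0 := fun h => ha₀ <| mk_eq_top_iff.1 <| top_le_iff.1 <| by
    simpa [h] using hmin i₀ hi₀
  by_contra! hcon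
  have hrest : mk (a i) < mk (∑ j ∈ s.erase i, a j) := by
    refine AddValuation.map_lt_sum (addValuation K) (mk_eq_top_iff.not.2 hai) fun j hj => ?_
    obtain ⟨hji, hjs⟩ := Finset.mem_erase.1 hj
    refine lt_of_le_of_ne (hmin j hjs) fun h => ?_
    refine hcon i hi j hjs hji.symm hai (fun haj => hai ?_) h
    rw [addValuation_apply, haj, mk_zero] at h
    exact mk_eq_top_iff.1 h
  rw [← Finset.add_sum_erase s a hi] at hsum
  rw [eq_neg_of_add_eq_zero_right hsum, mk_neg] at hrest
  exact hrest.false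

theorem eq_zero_of_mk_le_mk_sum_zsmul {Γ ι : Type*} [AddCommGroup Γ] [LinearOrder Γ]
    [IsOrderedAddMonoid Γ] [Fintype ι] [LinearOrder ι] {γ : ι → Γ} {t : Γ}
    (hγ : StrictMono fun i => mk (γ i)) (ht : ∀ i, mk (γ i) < mk t) {c : ι → ℤ}
    (hc : mk t ≤ mk (∑ i, c i • γ i)) : c = 0 := by
  by_contra hne
  have hsupp : (Finset.univ.filter fun i => c i ≠ 0).Nonempty := by
    simpa [Finset.filter_nonempty_iff, funext_iff] using hne
  have hmk {i : ι} (hi : c i ≠ 0) : mk (c i • γ i) = mk (γ i) := mk_smul _ hi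
  have hsum := mk_sum hsupp (a := fun i => c i • γ i) fun i hi j hj hij => by
    simp only [Finset.coe_filter, Finset.mem_univ, true_and, Set.mem_ofPred_eq] at hi hj
    simpa [hmk hi, hmk hj] using hγ hij
  have hfilter : ∑ i with c i ≠ 0, c i • γ i = ∑ i, c i • γ i :=
    Finset.sum_filter_of_ne fun i _ h hi => h (by simp [hi])
  rw [← hfilter, hsum, hmk (by simpa using Finset.min'_mem _ hsupp)] at hc
  exact hc.not_gt (ht _)

end ValueGroup

section Commensurability

open ArchimedeanClass MvPolynomial

variable {K : Type*} [Field K] [LinearOrder K] [IsStrictOrderedRing K]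
  {k : Type*} [Field k] [Algebra k K] {σ : Type*} [Fintype σ] {D : σ → ℕ}
  {F : σ → MvPolynomial σ k} {x : σ → K}

/-- Commensurability of `γ` with `t` at the cost of a factor at most `N`: some multiple `e • γ` with
`1 ≤ e ≤ N` is a multiple of `t`. -/
def IsCommensurable {Γ : Type*} [AddCommGroup Γ] (N : ℕ) (t γ : Γ) : Prop :=
  ∃ e : ℕ, 1 ≤ e ∧ e ≤ N ∧ e • γ ∈ AddSubgroup.zmultiples t

theorem IsCommensurable.of_zsmul {Γ : Type*} [AddCommGroup Γ] {N : ℕ} {t γ : Γ} {j j' : Fin (N + 1)}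
    (hj : j ≠ j') (h : ((j : ℤ) - j') • γ ∈ AddSubgroup.zmultiples t) : IsCommensurable N t γ := by
  refine ⟨((j : ℤ) - j').natAbs, ?_, ?_, ?_⟩
  · have := Fin.val_ne_of_ne hj
    omega
  · omega
  · rw [← natCast_zsmul, Int.natCast_natAbs]
    obtain habs | habs := abs_choice ((j : ℤ) - j')
    · rwa [habs]
    · rw [habs, neg_smul]
      exact neg_mem h

theorem exists_generator_of_isCommensurable {Γ : Type*} [AddCommGroup Γ] [LinearOrder Γ]
    [IsOrderedAddMonoid Γ] {H : AddSubgroup Γ} {t : Γ} (ht : 0 < t) (htH : t ∈ H) {N : ℕ}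
    (hH : ∀ y ∈ H, IsCommensurable N t y) :
    ∃ p ∈ H, 0 < p ∧ (∃ e : ℕ, 1 ≤ e ∧ e ≤ N ∧ t = e • p) ∧ H ≤ AddSubgroup.zmultiples p := by
  have hN : (N.factorial : ℤ) ≠ 0 := by exact_mod_cast N.factorial_ne_zero
  obtain ⟨a, ha⟩ := Int.subgroup_cyclic
    ((H.map (zsmulAddGroupHom (N.factorial : ℤ))).comap (zmultiplesHom Γ t))
  have hmem (n : ℤ) : (∃ y ∈ H, (N.factorial : ℤ) • y = n • t) ↔ ∃ q : ℤ, q * a = n := by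
    have := AddSubgroup.ext_iff.1 ha n
    rw [AddSubgroup.mem_comap, AddSubgroup.mem_map, AddSubgroup.mem_closure_singleton] at this
    simpa using this
  obtain ⟨p, hp, hpt⟩ := (hmem a).2 ⟨1, one_mul a⟩
  have hgen : H ≤ AddSubgroup.zmultiples p := fun y hy => by
    obtain ⟨e, he₁, heN, n, hn⟩ := hH y hy
    obtain ⟨d, hd⟩ := Nat.dvd_factorial he₁ heN
    have hy' : (N.factorial : ℤ) • y = (d * n) • t := by
      rw [hd, mul_comm e, Nat.cast_mul, mul_smul, natCast_zsmul y e, ← hn, mul_smul]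
    obtain ⟨q, hq⟩ := (hmem (d * n)).1 ⟨y, hy, hy'⟩
    refine ⟨q, smul_right_injective Γ hN ?_⟩
    simp only [smul_comm _ q p, hpt, ← mul_smul, hq, hy']
  obtain ⟨q, hq⟩ := hgen htH
  dsimp only at hq
  have hp₀ : p ≠ 0 := fun h => ht.ne' (by rw [← hq, h, smul_zero])
  have hq₀ : q ≠ 0 := fun h => ht.ne' (by rw [← hq, h, zero_smul])
  refine ⟨|p|, ?_, abs_pos.2 hp₀, ⟨q.natAbs, Int.natAbs_pos.2 hq₀, ?_, ?_⟩, ?_⟩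
  · obtain h | h := abs_choice p <;> simp [h, hp]
  · obtain ⟨e, he₁, heN, n, hn⟩ := hH p hp
    refine le_trans (Nat.le_of_dvd he₁ (Int.natCast_dvd_natCast.1 ?_)) heN
    rw [Int.natCast_natAbs, abs_dvd]
    refine ⟨n, smul_left_injective ℤ hp₀ ?_⟩
    simp only [natCast_zsmul, ← hn, ← hq, ← mul_smul, mul_comm]
  · rw [← natCast_zsmul, Int.natCast_natAbs, ← abs_zsmul, hq, abs_of_pos ht]
  · obtain h | h := abs_choice p <;> simp [h, hgen]

theorem archVal_mul_pow_mul_pow {a g h : K} (ha : a ≠ 0) (hg : g ≠ 0) (hh : h ≠ 0) {N : ℕ}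
    (j : Fin (N + 1)) :
    archVal (a * (g ^ (j : ℕ) * h ^ (N - j))) =
      archVal a + (j : ℤ) • archVal (g / h) + N • archVal h := by
  have hj : N • archVal h = (j : ℕ) • archVal h + (N - j) • archVal h := by
    rw [← add_nsmul, Nat.add_sub_cancel' (Nat.lt_succ_iff.1 j.2)]
  rw [archVal_mul ha (mul_ne_zero (pow_ne_zero _ hg) (pow_ne_zero _ hh)),
    archVal_mul (pow_ne_zero _ hg) (pow_ne_zero _ hh), archVal_pow hg, archVal_pow hh, hj,
    div_eq_mul_inv, archVal_mul hg (inv_ne_zero hh), archVal_inv hh, natCast_zsmul, smul_add,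
    smul_neg]
  abel

theorem archVal_mul_pow_mul_pow_mul_prod {a g h : K} (ha : a ≠ 0) (hg : g ≠ 0) (hh : h ≠ 0)
    {b : σ → K} (hb : ∀ l, b l ≠ 0) {N : ℕ} (j : Fin (N + 1)) (α : σ →₀ ℕ) :
    archVal (a * (g ^ (j : ℕ) * h ^ (N - j) * ∏ l, b l ^ α l)) =
      archVal a + (j : ℤ) • archVal (g / h) + N • archVal h +
        ∑ l, (α l : ℤ) • archVal (b l) := by
  rw [← mul_assoc, archVal_mul (mul_ne_zero ha (mul_ne_zero (pow_ne_zero _ hg) (pow_ne_zero _ hh)))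
    (Finset.prod_ne_zero_iff.2 fun l _ => pow_ne_zero _ (hb l)), archVal_mul_pow_mul_pow ha hg hh,
    archVal_prod fun l _ => pow_ne_zero _ (hb l)]
  simp only [archVal_pow (hb _), natCast_zsmul]

/-- Two terms of an algebraic relation between `g`, `h` and the `F l` must have the same value. -/
theorem exists_zsmul_archVal_add_sum_eq (hD : ∀ j, 0 < D j)
    (hF : ∀ j, (F j).totalDegree ≤ D j) (hFx : ∀ j, aeval x (F j) ≠ 0) {g h : MvPolynomial σ k}
    (hg : aeval x g ≠ 0) (hh : aeval x h ≠ 0) :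
    ∃ (j j' : Fin (∏ l, D l + 1)) (α α' : σ →₀ ℕ) (c c' : k),
      (j, α) ≠ (j', α') ∧ c ≠ 0 ∧ c' ≠ 0 ∧
      archVal (algebraMap k K c) + (j : ℤ) • archVal (aeval x g / aeval x h) +
          ∑ l, (α l : ℤ) • archVal (aeval x (F l)) =
        archVal (algebraMap k K c') + (j' : ℤ) • archVal (aeval x g / aeval x h) +
          ∑ l, (α' l : ℤ) • archVal (aeval x (F l)) := by
  have hdep := not_linearIndependent_pow_mul_pow_mul_prod hD hF g h
  rw [linearIndependent_iff'] at hdep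
  push Not at hdep
  obtain ⟨s, c, hrel, i₀, hi₀, hc₀⟩ := hdep
  have hmap {a : k} : algebraMap k K a ≠ 0 ↔ a ≠ 0 := by simp
  have hrel' := congrArg (aeval x) hrel
  simp only [map_sum, map_mul, map_pow, map_prod, map_zero, Algebra.smul_def,
    AlgHom.commutes] at hrel'
  obtain ⟨⟨j, α⟩, -, ⟨j', α'⟩, -, hne, hij, hij', heq⟩ := exists_ne_mk_eq_of_sum_eq_zero hrel'
    ⟨i₀, hi₀, mul_ne_zero (hmap.2 hc₀)
      (mul_ne_zero (mul_ne_zero (pow_ne_zero _ hg) (pow_ne_zero _ hh))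
        (Finset.prod_ne_zero_iff.2 fun l _ => pow_ne_zero _ (hFx l)))⟩
  have hc := left_ne_zero_of_mul hij
  have hc' := left_ne_zero_of_mul hij'
  rw [← archVal_eq_archVal hij hij', archVal_mul_pow_mul_pow_mul_prod hc hg hh hFx,
    archVal_mul_pow_mul_pow_mul_prod hc' hg hh hFx] at heq
  exact ⟨j, j', α, α', _, _, hne, hmap.1 hc, hmap.1 hc', by grind⟩

theorem isCommensurable_archVal_of_independent {t : ArchValueGroup K}
    (hk : ∀ c : k, c ≠ 0 → archVal (algebraMap k K c) ∈ AddSubgroup.zmultiples t)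
    (hD : ∀ j, 0 < D j) (hF : ∀ j, (F j).totalDegree ≤ D j) (hFx : ∀ j, aeval x (F j) ≠ 0)
    (hindep : ∀ c : σ → ℤ, mk t ≤ mk (∑ j, c j • archVal (aeval x (F j))) → c = 0)
    {y : K} (hy : y ∈ IntermediateField.adjoin k (range x)) (hy₀ : y ≠ 0)
    (hyt : mk t ≤ mk (archVal y)) : IsCommensurable (∏ j, D j) t (archVal y) := by
  obtain ⟨g, h, rfl⟩ := (IntermediateField.mem_adjoin_range_iff k x y).1 hy
  obtain ⟨hg, hh⟩ := div_ne_zero_iff.1 hy₀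
  obtain ⟨j, j', α, α', c, c', hne, hc, hc', heq⟩ :=
    exists_zsmul_archVal_add_sum_eq hD hF hFx hg hh
  have hbalance : ∑ l, ((α l : ℤ) - α' l) • archVal (aeval x (F l)) =
      archVal (algebraMap k K c') - archVal (algebraMap k K c) -
        ((j : ℤ) - j') • archVal (aeval x g / aeval x h) := by
    simp only [sub_smul, Finset.sum_sub_distrib]
    grind
  have hcoeff := sub_mem (hk _ hc') (hk _ hc)
  have hαα' : (fun l => (α l : ℤ) - α' l) = 0 := by
    refine hindep _ (hbalance ▸ mem_closedBallAddSubgroup_iff.1 (sub_mem ?_ ?_))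
    · exact (AddSubgroup.zmultiples_le_of_mem (mem_closedBallAddSubgroup_iff.2 le_rfl)) hcoeff
    · exact zsmul_mem (mem_closedBallAddSubgroup_iff.2 hyt) _
  obtain rfl : α = α' := by
    ext l
    exact_mod_cast sub_eq_zero.1 (congrFun hαα' l)
  refine .of_zsmul (j := j) (j' := j') (fun hj => hne (by rw [hj])) ?_
  simp only [sub_self, zero_smul, Finset.sum_const_zero, eq_comm (a := (0 : ArchValueGroup K)),
    sub_eq_zero] at hbalance
  rwa [← hbalance]

end Commensurability

section PlaneCurve

open ArchimedeanClass MvPolynomial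

variable {K : Type*} [Field K] [LinearOrder K] [IsStrictOrderedRing K]
  {k : Type*} [Field k] [Algebra k K]

theorem exists_sum_mul_pow_eq_zero_of_sum_mul_pow_eq_zero {R ι : Type*} [CommRing R] [IsDomain R]
    {s : Finset ι} {a : ι → R} {b : ι → ℕ} {Q : R} (hQ : Q ≠ 0)
    (hrel : ∑ i ∈ s, a i * Q ^ b i = 0) (hne : ∃ i ∈ s, a i ≠ 0) :
    ∃ b' : ι → ℕ, ∑ i ∈ s, a i * Q ^ b' i = 0 ∧ (∃ i ∈ s, a i ≠ 0 ∧ b' i = 0) ∧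
      ∀ i ∈ s, ∀ j ∈ s, a i ≠ 0 → a j ≠ 0 → b' i = 0 → b' j = 0 → b i = b j := by
  classical
  obtain ⟨i₀, hi₀, hmin⟩ := Finset.exists_min_image (s.filter fun i => a i ≠ 0) b
    (by simpa [Finset.filter_nonempty_iff] using hne)
  simp only [Finset.mem_filter, and_imp] at hi₀ hmin
  refine ⟨fun i => b i - b i₀, ?_, ⟨i₀, hi₀.1, hi₀.2, by simp⟩, fun i hi j hj hai haj hbi hbj => ?_⟩
  · refine (mul_eq_zero.1 ?_).resolve_right (pow_ne_zero (b i₀) hQ)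
    rw [← hrel, Finset.sum_mul]
    refine Finset.sum_congr rfl fun i hi => ?_
    by_cases hai : a i = 0
    · simp [hai]
    · rw [mul_assoc, ← pow_add, Nat.sub_add_cancel (hmin i hi hai)]
  · have hi₀i := hmin i hi hai
    have hi₀j := hmin j hj haj
    dsimp only at hbi hbj
    omega

theorem archVal_mul_pow_mul_pow_mul_pow {a g h b : K} (ha : a ≠ 0) (hg : g ≠ 0) (hh : h ≠ 0)
    (hb : b ≠ 0) {N : ℕ} (j : Fin (N + 1)) (n : ℕ) :
    archVal (a * (g ^ (j : ℕ) * h ^ (N - j)) * b ^ n) =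
      archVal a + (j : ℤ) • archVal (g / h) + N • archVal h + (n : ℤ) • archVal b := by
  rw [archVal_mul (mul_ne_zero ha (mul_ne_zero (pow_ne_zero _ hg) (pow_ne_zero _ hh)))
    (pow_ne_zero _ hb), archVal_mul_pow_mul_pow ha hg hh, archVal_pow hb, natCast_zsmul _ n]

/-- The relation between `g`, `h`, `f` and `Q` survives the evaluation `Q ↦ 0` once it is divided by
the lowest power of `Q` occurring in it. -/
theorem exists_zsmul_archVal_add_eq_of_aeval_eq_zero {x : Fin 2 → K}
    {f Q g h : MvPolynomial (Fin 2) k} {d₁ d₂ : ℕ} (hd₁ : 0 < d₁) (hd₂ : 0 < d₂)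
    (hf : f.totalDegree ≤ d₁) (hQ : Q.totalDegree ≤ d₂) (hQ₀ : Q ≠ 0) (hQx : aeval x Q = 0)
    (hfx : aeval x f ≠ 0) (hg : aeval x g ≠ 0) (hh : aeval x h ≠ 0) :
    ∃ (j j' : Fin (d₁ * d₂ + 1)) (n n' : ℕ) (c c' : k), (j, n) ≠ (j', n') ∧ c ≠ 0 ∧ c' ≠ 0 ∧
      archVal (algebraMap k K c) + (j : ℤ) • archVal (aeval x g / aeval x h) +
          (n : ℤ) • archVal (aeval x f) =
        archVal (algebraMap k K c') + (j' : ℤ) • archVal (aeval x g / aeval x h) +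
          (n' : ℤ) • archVal (aeval x f) := by
  have hdep := not_linearIndependent_pow_mul_pow_mul_prod (D := ![d₁, d₂]) (F := ![f, Q])
    (by simp [Fin.forall_fin_two, hd₁, hd₂]) (by simp [Fin.forall_fin_two, hf, hQ]) g h
  obtain ⟨N, hN⟩ : ∃ N, N = ∏ j, ![d₁, d₂] j := ⟨_, rfl⟩
  rw [← hN, linearIndependent_iff'] at hdep
  push Not at hdep
  obtain ⟨s, c, hrel, i₀, hi₀, hc₀⟩ := hdep
  obtain rfl : N = d₁ * d₂ := by simpa using hN
  simp only [smul_eq_C_mul, Fin.prod_univ_two, Matrix.cons_val_zero, Matrix.cons_val_one,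
    ← mul_assoc] at hrel
  simp only [mul_assoc _ (g ^ _) (h ^ _)] at hrel
  have hcoeff {i : Fin (d₁ * d₂ + 1) × (Fin 2 →₀ ℕ)} :
      C (c i) * (g ^ (i.1 : ℕ) * h ^ (d₁ * d₂ - i.1)) * f ^ i.2 0 ≠ 0 ↔ c i ≠ 0 := by
    have hne {p : MvPolynomial (Fin 2) k} (hp : aeval x p ≠ 0) : p ≠ 0 := fun h => hp (by simp [h])
    simp [hne hg, hne hh, hne hfx]
  obtain ⟨b, hrel, ⟨i₁, hi₁, hc₁, hb₁⟩, hb⟩ :=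
    exists_sum_mul_pow_eq_zero_of_sum_mul_pow_eq_zero hQ₀ hrel ⟨i₀, hi₀, hcoeff.2 hc₀⟩
  have hrel := congrArg (aeval x) hrel
  simp only [map_sum, map_mul, map_pow, map_zero, algHom_C, hQx] at hrel
  have hterm {i : Fin (d₁ * d₂ + 1) × (Fin 2 →₀ ℕ)} :
      algebraMap k K (c i) * (aeval x g ^ (i.1 : ℕ) * aeval x h ^ (d₁ * d₂ - i.1)) *
        aeval x f ^ i.2 0 * 0 ^ b i ≠ 0 ↔ c i ≠ 0 ∧ b i = 0 := by
    simp [hg, hh, hfx]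
  obtain ⟨⟨j, α⟩, hi, ⟨j', α'⟩, hi', hne, hij, hij', heq⟩ :=
    exists_ne_mk_eq_of_sum_eq_zero hrel ⟨i₁, hi₁, hterm.2 ⟨hcoeff.1 hc₁, hb₁⟩⟩
  rw [← archVal_eq_archVal hij hij'] at heq
  obtain ⟨hc, hbj⟩ := hterm.1 hij
  obtain ⟨hc', hbj'⟩ := hterm.1 hij'
  have hmap {a : k} (ha : a ≠ 0) : algebraMap k K a ≠ 0 := by simpa
  simp only [hbj, hbj', pow_zero, mul_one] at heq
  rw [archVal_mul_pow_mul_pow_mul_pow (hmap hc) hg hh hfx,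
    archVal_mul_pow_mul_pow_mul_pow (hmap hc') hg hh hfx] at heq
  refine ⟨j, j', α 0, α' 0, _, _, fun hjn => hne ?_, hc, hc', by grind⟩
  rw [Prod.mk.injEq] at hjn
  rw [hjn.1, Finsupp.ext (Fin.forall_fin_two.2
    ⟨hjn.2, hb _ hi _ hi' (hcoeff.2 hc) (hcoeff.2 hc') hbj hbj'⟩)]

theorem isCommensurable_archVal_of_aeval_eq_zero {x : Fin 2 → K} {f Q : MvPolynomial (Fin 2) k}
    {d₁ d₂ : ℕ} (hk : ∀ c : k, c ≠ 0 → archVal (algebraMap k K c) = 0) (hd₁ : 0 < d₁)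
    (hd₂ : 0 < d₂) (hf : f.totalDegree ≤ d₁) (hQ : Q.totalDegree ≤ d₂)
    (hfx : archVal (aeval x f) ≠ 0) (hQ₀ : Q ≠ 0) (hQx : aeval x Q = 0) {y : K}
    (hy : y ∈ IntermediateField.adjoin k (range x)) (hy₀ : y ≠ 0) :
    IsCommensurable (d₁ * d₂) (archVal (aeval x f)) (archVal y) := by
  obtain ⟨g, h, rfl⟩ := (IntermediateField.mem_adjoin_range_iff k x y).1 hy
  obtain ⟨hg, hh⟩ := div_ne_zero_iff.1 hy₀
  have hfx₀ : aeval x f ≠ 0 := fun h => hfx (by simp [archVal, h])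
  obtain ⟨j, j', n, n', c, c', hne, hc, hc', heq⟩ :=
    exists_zsmul_archVal_add_eq_of_aeval_eq_zero hd₁ hd₂ hf hQ hQ₀ hQx hfx₀ hg hh
  have hbalance : ((j : ℤ) - j') • archVal (aeval x g / aeval x h) =
      ((n' : ℤ) - n) • archVal (aeval x f) := by
    simp only [sub_smul, hk _ hc, hk _ hc'] at heq ⊢
    grind
  refine .of_zsmul (j := j) (j' := j') (fun hj => hne ?_) (hbalance ▸ ⟨_, rfl⟩)
  rw [hj, sub_self, zero_smul, eq_comm, smul_eq_zero_iff_left hfx, sub_eq_zero] at hbalance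
  rw [hj, Prod.mk.injEq]
  exact ⟨rfl, by exact_mod_cast hbalance.symm⟩

end PlaneCurve

section RealExtension

open ArchimedeanClass

variable {K : Type*} [Field K] [LinearOrder K] [IsStrictOrderedRing K]

theorem mk_eq_mk_of_lt_mk_sub {x y : K} (h : mk x < mk (x - y)) : mk y = mk x := by
  rw [← sub_sub_cancel x y, mk_sub_eq_mk_left h]

theorem le_mk_add {c : ArchimedeanClass K} {x y : K} (hx : c ≤ mk x) (hy : c ≤ mk y) :
    c ≤ mk (x + y) :=
  (le_min hx hy).trans (min_le_mk_add x y)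

theorem le_mk_sum {ι : Type*} {s : Finset ι} {c : ArchimedeanClass K} {x : ι → K}
    (hx : ∀ i ∈ s, c ≤ mk (x i)) : c ≤ mk (∑ i ∈ s, x i) :=
  (addValuation K).map_le_sum hx

variable [Algebra ℝ K]

/-- The embedding of `ℝ` into an ordered extension field; it is monotone because nonnegative reals
are squares. -/
def realOrderRingHom (K : Type*) [Field K] [LinearOrder K] [IsStrictOrderedRing K] [Algebra ℝ K] :
    ℝ →+*o K where
  __ := algebraMap ℝ K
  monotone' := ringHom_monotone (fun _ => Real.isSquare_iff.2) _

theorem mk_algebraMap_real {r : ℝ} (hr : r ≠ 0) : mk (algebraMap ℝ K r) = 0 :=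
  mk_map_of_archimedean' (realOrderRingHom K) hr

theorem mk_algebraMap_real_nonneg (r : ℝ) : 0 ≤ mk (algebraMap ℝ K r) := by
  obtain rfl | hr := eq_or_ne r 0
  · simp
  · exact (mk_algebraMap_real hr).ge

theorem mk_sub_algebraMap_stdPart_pos {x : K} (hx : 0 ≤ mk x) :
    0 < mk (x - algebraMap ℝ K (stdPart x)) :=
  mk_sub_stdPart_pos (realOrderRingHom K) hx

open Polynomial in
theorem mk_aeval_nonneg {x : K} (hx : 0 ≤ mk x) (q : ℝ[X]) : 0 ≤ mk (aeval x q) := by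
  rw [aeval_eq_sum_range]
  refine le_mk_sum fun i _ => ?_
  rw [Algebra.smul_def, mk_mul, mk_pow]
  exact add_nonneg (mk_algebraMap_real_nonneg _) (nsmul_nonneg hx i)

open Polynomial in
theorem mk_aeval_eq_zero {x : K} (hx : 0 < mk x) {q : ℝ[X]} (hq : q.coeff 0 ≠ 0) :
    mk (aeval x q) = 0 := by
  rw [← divX_mul_X_add q, map_add, map_mul, aeval_X, aeval_C, mk_add_eq_mk_right,
    mk_algebraMap_real hq]
  rw [mk_algebraMap_real hq, mk_mul]
  exact hx.trans_le (le_add_of_nonneg_left (mk_aeval_nonneg hx.le _))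

open Polynomial in
theorem mk_aeval_X_pow_mul {x : K} (hx : 0 < mk x) {q : ℝ[X]} (hq : q.coeff 0 ≠ 0) (n : ℕ) :
    mk (aeval x (X ^ n * q)) = n • mk x := by
  rw [map_mul, map_pow, aeval_X, mk_mul, mk_pow, mk_aeval_eq_zero hx hq, add_zero]

open Polynomial in
theorem exists_eq_X_pow_mul_of_ne_zero {R : Type*} [CommRing R] {q : R[X]} (hq : q ≠ 0) :
    ∃ (n : ℕ) (r : R[X]), q = X ^ n * r ∧ r.coeff 0 ≠ 0 := by
  obtain ⟨r, hr, hndvd⟩ := exists_eq_pow_rootMultiplicity_mul_and_not_dvd q hq 0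
  rw [map_zero, sub_zero] at hr hndvd
  exact ⟨_, r, hr, mt X_dvd_iff.2 hndvd⟩

open IntermediateField in
theorem archVal_mem_zmultiples_of_mem_adjoin {t : K} (ht₀ : t ≠ 0) (ht : 0 < mk t) {y : K}
    (hy : y ∈ ℝ⟮t⟯) (hy₀ : y ≠ 0) : archVal y ∈ AddSubgroup.zmultiples (archVal t) := by
  obtain ⟨r, s, rfl⟩ := (mem_adjoin_simple_iff ℝ y).1 hy
  obtain ⟨hr, hs⟩ := div_ne_zero_iff.1 hy₀
  have hmem {q : Polynomial ℝ} (hq : Polynomial.aeval t q ≠ 0) :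
      archVal (Polynomial.aeval t q) ∈ AddSubgroup.zmultiples (archVal t) := by
    obtain ⟨n, q, rfl, hqn⟩ := exists_eq_X_pow_mul_of_ne_zero (q := q) fun h => hq (by simp [h])
    rw [(archVal_eq_archVal hq (pow_ne_zero n ht₀)).2 (by rw [mk_aeval_X_pow_mul ht hqn, mk_pow]),
      archVal_pow ht₀]
    exact nsmul_mem (AddSubgroup.mem_zmultiples _) n
  rw [div_eq_mul_inv, archVal_mul hr (inv_ne_zero hs), archVal_inv hs]
  exact add_mem (hmem hr) (neg_mem (hmem hs))

end RealExtension

section Uniformizer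

open ArchimedeanClass

theorem polynomial_aeval_mem_intermediateField {k K : Type*} [Field k] [Field K] [Algebra k K]
    {L : IntermediateField k K} {x : K} (hx : x ∈ L) (q : Polynomial k) :
    Polynomial.aeval x q ∈ L := by
  rw [Polynomial.aeval_eq_sum_range]
  exact sum_mem fun i _ => L.smul_mem (pow_mem hx i)

variable {K : Type*} [Field K] [LinearOrder K] [IsStrictOrderedRing K]

/-- The value group of a subfield, as a subgroup of the value group of the ambient field. -/
def archValues (L : Subfield K) : AddSubgroup (ArchValueGroup K) where
  carrier := {γ | ∃ y ∈ L, y ≠ 0 ∧ archVal y = γ}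
  zero_mem' := ⟨1, one_mem L, one_ne_zero, archVal_one⟩
  add_mem' := by
    rintro _ _ ⟨y, hy, hy₀, rfl⟩ ⟨z, hz, hz₀, rfl⟩
    exact ⟨y * z, mul_mem hy hz, mul_ne_zero hy₀ hz₀, archVal_mul hy₀ hz₀⟩
  neg_mem' := by
    rintro _ ⟨y, hy, hy₀, rfl⟩
    exact ⟨y⁻¹, inv_mem hy, inv_ne_zero hy₀, archVal_inv hy₀⟩

theorem archVal_mem_archValues {L : Subfield K} {y : K} (hy : y ∈ L) (hy₀ : y ≠ 0) :
    archVal y ∈ archValues L := ⟨y, hy, hy₀, rfl⟩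

theorem nsmul_mk_eq_iff {x y : K} (hx : x ≠ 0) (hy : y ≠ 0) {m n : ℕ} :
    m • mk x = n • mk y ↔ m • archVal x = n • archVal y := by
  rw [← archVal_pow hx, ← archVal_pow hy, archVal_eq_archVal (pow_ne_zero m hx) (pow_ne_zero n hy),
    mk_pow, mk_pow]

theorem nsmul_mk_le_iff {x y : K} (hx : x ≠ 0) (hy : y ≠ 0) {m n : ℕ} :
    m • mk x ≤ n • mk y ↔ m • archVal x ≤ n • archVal y := by
  rw [← archVal_pow hx, ← archVal_pow hy, archVal_le_archVal (pow_ne_zero m hx) (pow_ne_zero n hy),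
    mk_pow, mk_pow]

theorem mk_mul_le_mk_mul_iff {x y z : K} (hx : x ≠ 0) : mk (x * y) ≤ mk (x * z) ↔ mk y ≤ mk z := by
  rw [mk_mul, mk_mul, add_le_add_iff_right_of_ne_top
    (mk_eq_top_iff.not.2 hx)]

theorem strictMono_nsmul_mk {x : K} (hx₀ : x ≠ 0) (hx : 0 < mk x) :
    StrictMono fun n : ℕ => n • mk x := by
  refine strictMono_nat_of_lt_succ fun n => not_le.1 fun h => ?_
  rw [succ_nsmul, ← mk_pow, ← mk_mul, ← mul_one (x ^ n), mul_assoc, one_mul,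
    mk_mul_le_mk_mul_iff (pow_ne_zero n hx₀), mk_one] at h
  exact h.not_gt hx

variable [Algebra ℝ K] {L : IntermediateField ℝ K} {π : K}

/-- A uniformizer of an intermediate field of `K / ℝ`: an infinitesimal of least order. The field
itself need not be discretely valued: it may contain infinitesimals of much larger order. -/
structure IsUniformizer (L : IntermediateField ℝ K) (π : K) : Prop where intro ::
  mem : π ∈ L
  ne_zero : π ≠ 0
  mk_pos : 0 < mk π
  mk_le : ∀ {y : K}, y ∈ L → 0 < mk y → mk π ≤ mk y

theorem exists_isUniformizer {t : K} (htL : t ∈ L) (ht₀ : t ≠ 0) (ht : 0 < mk t) {N : ℕ}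
    (hL : ∀ y ∈ L, y ≠ 0 → mk (archVal t) ≤ mk (archVal y) →
      IsCommensurable N (archVal t) (archVal y)) :
    ∃ π, IsUniformizer L π ∧ ∃ e : ℕ, 1 ≤ e ∧ e ≤ N ∧ mk t = e • mk π := by
  have htv : 0 < archVal t := (archVal_pos ht₀).2 ht
  obtain ⟨_, ⟨⟨π, hπ, hπ₀, rfl⟩, -⟩, hpos, ⟨e, he, heN, hte⟩, hgen⟩ :=
    exists_generator_of_isCommensurable
      (H := archValues L.toSubfield ⊓ (mk (archVal t)).closedBallAddSubgroup) htv
      ⟨archVal_mem_archValues htL ht₀, mem_closedBallAddSubgroup_iff.2 le_rfl⟩ (by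
        rintro _ ⟨⟨y, hy, hy₀, rfl⟩, hyt⟩
        exact hL y hy hy₀ (mem_closedBallAddSubgroup_iff.1 hyt))
  refine ⟨π, ⟨hπ, hπ₀, (archVal_pos hπ₀).1 hpos, fun {y} hy hy_pos => ?_⟩, e, he, heN, ?_⟩
  · obtain rfl | hy₀ := eq_or_ne y 0
    · simp
    have hyv : 0 < archVal y := (archVal_pos hy₀).2 hy_pos
    rw [← archVal_le_archVal hπ₀ hy₀]
    obtain hyt | hyt := le_or_gt (mk (archVal t)) (mk (archVal y))
    · obtain ⟨q, hq⟩ := hgen ⟨archVal_mem_archValues hy hy₀, mem_closedBallAddSubgroup_iff.2 hyt⟩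
      dsimp only at hq
      have hq₁ : 0 < q := (zsmul_lt_zsmul_iff_left hpos).1 (by rwa [zero_smul, hq])
      simpa [hq] using zsmul_le_zsmul_left hpos.le hq₁
    · calc archVal π ≤ e • archVal π := le_self_nsmul hpos.le (by omega)
        _ = archVal t := hte.symm
        _ ≤ archVal y := (lt_of_mk_lt_mk_of_nonneg hyt hyv.le).le
  · simpa using (nsmul_mk_eq_iff (m := 1) ht₀ hπ₀).2 (by simpa using hte)

namespace IsUniformizer

theorem exists_mk_eq_nsmul (hπ : IsUniformizer L π) {n : ℕ} {y : K} (hy : y ∈ L)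
    (hy₀ : 0 ≤ mk y) (hyn : mk y ≤ n • mk π) : ∃ a ≤ n, mk y = a • mk π := by
  induction n generalizing y with
  | zero => exact ⟨0, le_rfl, by simpa using hyn.antisymm (by simpa using hy₀)⟩
  | succ n ih =>
    obtain hy₀ | hy₀ := hy₀.eq_or_lt
    · exact ⟨0, n.succ.zero_le, by simpa using hy₀.symm⟩
    obtain ⟨z, hzL, rfl⟩ : ∃ z ∈ L, π * z = y :=
      ⟨y / π, div_mem hy hπ.mem, mul_div_cancel₀ _ hπ.ne_zero⟩
    obtain ⟨a, han, ha⟩ := ih hzL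
      (by simpa using (mk_mul_le_mk_mul_iff (y := 1) hπ.ne_zero).1 (by simpa using hπ.mk_le hy hy₀))
      (by
        rwa [succ_nsmul', ← mk_pow, ← mk_mul, mk_mul_le_mk_mul_iff hπ.ne_zero, mk_pow] at hyn)
    exact ⟨a + 1, by omega, by rw [mk_mul, ha, succ_nsmul']⟩

open Polynomial in
theorem exists_polynomial_approx (hπ : IsUniformizer L π) {y : K} (hy : y ∈ L) (hy₀ : 0 ≤ mk y)
    (n : ℕ) : ∃ S : ℝ[X], n • mk π ≤ mk (y - aeval π S) := by
  induction n with
  | zero => exact ⟨0, by simpa using hy₀⟩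
  | succ n ih =>
    obtain ⟨S, hS⟩ := ih
    obtain ⟨z, hzL, hz⟩ : ∃ z ∈ L, π ^ n * z = y - aeval π S :=
      ⟨_, div_mem (sub_mem hy (polynomial_aeval_mem_intermediateField hπ.mem S)) (pow_mem hπ.mem n),
        mul_div_cancel₀ _ (pow_ne_zero n hπ.ne_zero)⟩
    have hz₀ : 0 ≤ mk z := by
      rw [← mk_one, ← mk_mul_le_mk_mul_iff (pow_ne_zero n hπ.ne_zero), hz]
      simpa using hS
    refine ⟨S + X ^ n * C (stdPart z), ?_⟩
    have hfactor : y - aeval π (S + X ^ n * C (stdPart z)) =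
        π ^ n * (z - algebraMap ℝ K (stdPart z)) := by
      rw [map_add, ← sub_sub, ← hz]
      simp only [map_mul, map_pow, aeval_X, aeval_C, mul_sub]
    rw [hfactor, mk_mul, succ_nsmul, ← mk_pow]
    gcongr
    exact hπ.mk_le (sub_mem hzL (algebraMap_mem L _)) (mk_sub_algebraMap_stdPart_pos hz₀)

end IsUniformizer

end Uniformizer

section GradientOrder

open ArchimedeanClass

open MvPolynomial in
theorem derivation_aeval_eq_sum_pderiv {R A M σ : Type*} [CommSemiring R] [CommSemiring A]
    [Algebra R A] [AddCommMonoid M] [Module A M] [Module R M] [Fintype σ]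
    (D : Derivation R A M) (x : σ → A) (p : MvPolynomial σ R) :
    D (aeval x p) = ∑ j, aeval x (pderiv j p) • D (x j) := by
  classical
  induction p using MvPolynomial.induction_on with
  | C c => simp
  | add p q hp hq => simp [hp, hq, add_smul, Finset.sum_add_distrib]
  | mul_X p i hp =>
    simp only [map_mul, aeval_X, Derivation.leibniz, hp, smul_eq_mul, map_add, add_smul,
      Finset.sum_add_distrib, pderiv_X, Pi.single_apply, mul_smul, Finset.smul_sum]
    simp [apply_ite, ite_smul]

variable {K : Type*} [Field K] [LinearOrder K] [IsStrictOrderedRing K] [Algebra ℝ K] {σ : Type*}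

open MvPolynomial

theorem mk_mvPolynomial_aeval_nonneg {x : σ → K} (hx : ∀ j, 0 ≤ mk (x j)) (p : MvPolynomial σ ℝ) :
    0 ≤ mk (aeval x p) := by
  induction p using MvPolynomial.induction_on with
  | C c => simpa using mk_algebraMap_real_nonneg c
  | add p q hp hq => simpa using le_mk_add hp hq
  | mul_X p i hp => simpa using add_nonneg hp (hx i)

theorem le_mk_aeval_sub_aeval {x y : σ → K} (hx : ∀ j, 0 ≤ mk (x j)) (hy : ∀ j, 0 ≤ mk (y j))
    {c : ArchimedeanClass K} (hc : ∀ j, c ≤ mk (x j - y j)) (p : MvPolynomial σ ℝ) :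
    c ≤ mk (aeval x p - aeval y p) := by
  induction p using MvPolynomial.induction_on with
  | C c => simp
  | add p q hp hq =>
    rw [map_add, map_add, add_sub_add_comm]
    exact le_mk_add hp hq
  | mul_X p i hp =>
    have hsplit : aeval x (p * X i) - aeval y (p * X i) =
        (aeval x p - aeval y p) * x i + aeval y p * (x i - y i) := by
      simp only [map_mul, aeval_X]
      ring
    rw [hsplit]
    refine le_mk_add ?_ ?_
    · exact hp.trans (mk_mul (_ : K) _ ▸ le_add_of_nonneg_right (hx i))
    · exact (hc i).trans
        (mk_mul (_ : K) _ ▸ le_add_of_nonneg_left (mk_mvPolynomial_aeval_nonneg hy p))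

theorem mk_aeval_derivative {π : K} (hπ₀ : π ≠ 0) (hπ : 0 < mk π) {q : Polynomial ℝ} {a : ℕ}
    (ha : 1 ≤ a) (hq : mk (Polynomial.aeval π q) = a • mk π) :
    mk (Polynomial.aeval π (Polynomial.derivative q)) = (a - 1) • mk π := by
  obtain ⟨n, r, rfl, hr⟩ := exists_eq_X_pow_mul_of_ne_zero (q := q) fun h => by
    rw [h, map_zero, mk_zero, eq_comm, ← mk_pow, mk_eq_top_iff] at hq
    exact pow_ne_zero a hπ₀ hq
  rw [mk_aeval_X_pow_mul hπ hr] at hq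
  obtain rfl : n = a := (strictMono_nsmul_mk hπ₀ hπ).injective hq
  have hderiv : Polynomial.derivative (Polynomial.X ^ n * r) =
      Polynomial.X ^ (n - 1) * (Polynomial.C (n : ℝ) * r +
        Polynomial.X * Polynomial.derivative r) := by
    obtain ⟨n, rfl⟩ := Nat.exists_eq_add_of_le' ha
    rw [Polynomial.derivative_mul, Polynomial.derivative_X_pow, Nat.add_sub_cancel, pow_succ]
    ring
  have hn : n ≠ 0 := by omega
  rw [hderiv, mk_aeval_X_pow_mul hπ (by simp [hr, hn])]

variable {L : IntermediateField ℝ K} {π : K}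

theorem IsUniformizer.exists_velocity [Fintype σ] (hπ : IsUniformizer L π) {x : σ → K}
    (hxL : ∀ j, x j ∈ L) (hx : ∀ j, 0 ≤ mk (x j)) (n : ℕ) :
    ∃ v : σ → K, (∀ j, 0 ≤ mk (v j)) ∧ ∀ (p : MvPolynomial σ ℝ) (a : ℕ), 1 ≤ a → a ≤ n →
      mk (aeval x p) = a • mk π → mk (∑ j, aeval x (pderiv j p) * v j) = (a - 1) • mk π := by
  choose S hS using fun j => hπ.exists_polynomial_approx (hxL j) (hx j) (n + 1)
  obtain ⟨y, hy⟩ : ∃ y : σ → K, ∀ j, y j = Polynomial.aeval π (S j) := ⟨_, fun _ => rfl⟩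
  simp only [← hy] at hS
  have hy₀ (j : σ) : 0 ≤ mk (y j) := hy j ▸ mk_aeval_nonneg hπ.mk_pos.le _
  have haeval (p : MvPolynomial σ ℝ) : Polynomial.aeval π (aeval S p) = aeval y p := by
    rw [funext hy, comp_aeval_apply]
  have happrox (p : MvPolynomial σ ℝ) : (n + 1) • mk π ≤ mk (aeval x p - aeval y p) :=
    le_mk_aeval_sub_aeval hx hy₀ hS p
  refine ⟨fun j => Polynomial.aeval π (Polynomial.derivative (S j)),
    fun j => mk_aeval_nonneg hπ.mk_pos.le _, fun p a ha han hpa => ?_⟩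
  have hlt {b : ℕ} (hb : b ≤ n) : b • mk π < (n + 1) • mk π :=
    strictMono_nsmul_mk hπ.ne_zero hπ.mk_pos (by omega)
  have hq : mk (Polynomial.aeval π (aeval S p)) = a • mk π := by
    rw [haeval, ← hpa, mk_eq_mk_of_lt_mk_sub ((hpa ▸ hlt han).trans_le (happrox p))]
  have hchain : ∑ j, aeval y (pderiv j p) * Polynomial.aeval π (Polynomial.derivative (S j)) =
      Polynomial.aeval π (Polynomial.derivative (aeval S p)) := by
    have := congrArg (Polynomial.aeval π)
      (derivation_aeval_eq_sum_pderiv Polynomial.derivative' S p)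
    simpa [haeval] using this.symm
  rw [← mk_aeval_derivative hπ.ne_zero hπ.mk_pos ha hq]
  refine mk_eq_mk_of_lt_mk_sub ?_
  rw [mk_aeval_derivative hπ.ne_zero hπ.mk_pos ha hq, mk_sub_comm, ← hchain,
    ← Finset.sum_sub_distrib]
  refine (hlt (b := a - 1) (by omega)).trans_le (le_mk_sum fun j _ => ?_)
  rw [← sub_mul, mk_mul]
  exact le_add_of_le_of_nonneg (happrox _) (mk_aeval_nonneg hπ.mk_pos.le _)

/-- The squared Euclidean norm of the gradient, as a polynomial. -/
def gradSq [Fintype σ] {R : Type*} [CommSemiring R] (p : MvPolynomial σ R) : MvPolynomial σ R :=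
  ∑ j, pderiv j p ^ 2

theorem IsUniformizer.mk_aeval_gradSq_le [Fintype σ] (hπ : IsUniformizer L π) {x : σ → K}
    (hxL : ∀ j, x j ∈ L) (hx : ∀ j, 0 ≤ mk (x j)) {p : MvPolynomial σ ℝ} {a : ℕ} (ha : 1 ≤ a)
    (hp : mk (aeval x p) = a • mk π) : mk (aeval x (gradSq p)) ≤ (2 * a - 2) • mk π := by
  obtain ⟨v, hv, hvp⟩ := hπ.exists_velocity hxL hx a
  calc mk (aeval x (gradSq p))
      ≤ mk (aeval x (gradSq p)) + mk (∑ j, v j ^ 2) :=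
        le_add_of_nonneg_right (le_mk_sum fun j _ => mk_pow 2 (v j) ▸ nsmul_nonneg (hv j) 2)
    _ = mk ((∑ j, aeval x (pderiv j p) ^ 2) * ∑ j, v j ^ 2) := by
        rw [mk_mul, gradSq]
        simp only [map_sum, map_pow]
    _ ≤ ArchimedeanClass.mk ((∑ j, aeval x (pderiv j p) * v j) ^ 2) :=
        mk_antitoneOn (sq_nonneg _) (mul_nonneg (Finset.sum_nonneg fun j _ => sq_nonneg _)
          (Finset.sum_nonneg fun j _ => sq_nonneg _)) (Finset.sum_mul_sq_le_sq_mul_sq _ _ _)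
    _ = (2 * a - 2) • mk π := by
        rw [mk_pow, hvp p a ha le_rfl hp, ← mul_nsmul', Nat.mul_sub_one]

end GradientOrder

section Superscales

open ArchimedeanClass

/-- A scale family below `t`: positive infinitesimals whose orders are infinitely large compared
with the order of `t`, and such that the order of each member is infinitely large compared with the
order of every later one. -/
structure IsScaleFamily {K : Type*} [Field K] [LinearOrder K] [IsStrictOrderedRing K] {n : ℕ}
    (t : K) (ζ : Fin n → K) : Prop where
  pos : ∀ j, 0 < ζ j
  mk_pos : ∀ j, 0 < ArchimedeanClass.mk (ζ j)
  mk_archVal_lt : ∀ j, ArchimedeanClass.mk (archVal (ζ j)) < ArchimedeanClass.mk (archVal t)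
  strictMono : StrictMono fun j => ArchimedeanClass.mk (archVal (ζ j))

theorem exists_superscale {t : ℝ*} (ht₀ : 0 < t) (ht : 0 < mk t) :
    ∃ ζ : ℝ*, 0 < ζ ∧ 0 < mk ζ ∧ mk (archVal ζ) < mk (archVal t) := by
  obtain ⟨u, rfl⟩ := Hyperreal.ofSeq_surjective t
  have hu₀ : ∀ᶠ i in hyperfilter ℕ, 0 < u i := by
    simpa using Hyperreal.ofSeq_lt_ofSeq (f := fun _ => 0).1 ht₀
  have hu₁ : ∀ᶠ i in hyperfilter ℕ, u i < 1 := by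
    have ht₁ : Hyperreal.ofSeq u < 1 := by
      rw [← mk_one] at ht
      exact lt_of_mk_lt_mk_of_nonneg ht zero_le_one
    simpa using Hyperreal.ofSeq_lt_ofSeq (g := fun _ => 1).1 ht₁
  obtain ⟨ζ, hζ⟩ : ∃ ζ, ζ = Hyperreal.ofSeq fun i => u i ^ i := ⟨_, rfl⟩
  have hζ₀ : 0 < ζ := hζ ▸
    Hyperreal.ofSeq_lt_ofSeq (f := fun _ => 0).2 (hu₀.mono fun i hi => pow_pos hi i)
  have hle (n : ℕ) : ζ ≤ Hyperreal.ofSeq u ^ n := by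
    have hn : ∀ᶠ i in hyperfilter ℕ, n ≤ i := Nat.hyperfilter_le_atTop (eventually_ge_atTop n)
    refine hζ ▸ Hyperreal.ofSeq_le_ofSeq (g := fun i => u i ^ n).2 ?_
    filter_upwards [hu₀, hu₁, hn] with i hi₀ hi₁ hi
    exact pow_le_pow_of_le_one hi₀.le hi₁.le hi
  have hval (n : ℕ) : n • archVal (Hyperreal.ofSeq u) ≤ archVal ζ := by
    rw [← archVal_pow ht₀.ne', archVal_le_archVal (pow_ne_zero n ht₀.ne') hζ₀.ne']
    exact mk_antitoneOn hζ₀.le (pow_pos ht₀ n).le (hle n)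
  have htv : 0 < archVal (Hyperreal.ofSeq u) := (archVal_pos ht₀.ne').2 ht
  have hζv : 0 < archVal ζ := htv.trans_le (by simpa using hval 1)
  refine ⟨ζ, hζ₀, (archVal_pos hζ₀.ne').1 hζv, mk_lt_mk.2 fun n => ?_⟩
  rw [abs_of_pos htv, abs_of_pos hζv]
  exact (nsmul_left_strictMono htv n.lt_succ_self).trans_le (hval (n + 1))

theorem exists_isScaleFamily {t : ℝ*} (ht₀ : 0 < t) (ht : 0 < mk t) (n : ℕ) :
    ∃ ζ : Fin n → ℝ*, IsScaleFamily t ζ := by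
  choose next hpos hmk hlt using
    fun s : {s : ℝ* // 0 < s ∧ 0 < mk s} => exists_superscale s.2.1 s.2.2
  obtain ⟨ρ, hρ⟩ : ∃ ρ : ℕ → {s : ℝ* // 0 < s ∧ 0 < mk s},
      ρ = fun i => (fun s => ⟨next s, hpos s, hmk s⟩)^[i] ⟨t, ht₀, ht⟩ := ⟨_, rfl⟩
  have hanti : StrictAnti fun i => mk (archVal (ρ i : ℝ*)) := by
    refine strictAnti_nat_of_succ_lt fun i => ?_
    simp only [hρ, Function.iterate_succ_apply']
    exact hlt _
  refine ⟨fun j => ρ (n - j), fun j => (ρ _).2.1, fun j => (ρ _).2.2, fun j => ?_,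
    fun i j hij => hanti (by omega)⟩
  simpa [hρ] using hanti (show 0 < n - j by omega)

end Superscales

section Transfer

open MvPolynomial

variable {n : ℕ}

theorem exists_seq_mvPolynomial_ofSeq_eq (Φ : MvPolynomial (Fin n) ℝ*) :
    ∃ φ : ℕ → MvPolynomial (Fin n) ℝ, ∀ u : ℕ → Fin n → ℝ,
      eval (fun j => Hyperreal.ofSeq fun i => u i j) Φ =
        Hyperreal.ofSeq (fun i => eval (u i) (φ i)) ∧
      ∀ l, eval (fun j => Hyperreal.ofSeq fun i => u i j) (pderiv l Φ) =
        Hyperreal.ofSeq (fun i => eval (u i) (pderiv l (φ i))) := by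
  induction Φ using MvPolynomial.induction_on with
  | C c =>
    obtain ⟨c, rfl⟩ := Hyperreal.ofSeq_surjective c
    exact ⟨fun i => C (c i), fun u => ⟨by simp, fun l => by simp only [pderiv_C, map_zero]; rfl⟩⟩
  | add Φ Ψ hΦ hΨ =>
    obtain ⟨φ, hφ⟩ := hΦ
    obtain ⟨ψ, hψ⟩ := hΨ
    refine ⟨fun i => φ i + ψ i, fun u => ⟨?_, fun l => ?_⟩⟩
    · rw [map_add, (hφ u).1, (hψ u).1]
      simp only [map_add]
      rfl
    · rw [map_add, map_add, (hφ u).2 l, (hψ u).2 l]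
      simp only [map_add]
      rfl
  | mul_X Φ j hΦ =>
    obtain ⟨φ, hφ⟩ := hΦ
    refine ⟨fun i => φ i * X j, fun u => ⟨?_, fun l => ?_⟩⟩
    · rw [map_mul, (hφ u).1, eval_X]
      simp only [map_mul, eval_X]
      rfl
    · simp only [Derivation.leibniz, map_add, smul_eq_mul, map_mul, eval_X, (hφ u).1, (hφ u).2 l,
        pderiv_X, Pi.single_apply]
      obtain rfl | hjl := eq_or_ne j l
      · simp only [if_true, map_one, mul_one]
        rfl
      · simp only [if_neg hjl, map_zero, mul_zero, zero_add]
        rfl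

theorem hasFDerivAt_mvPolynomial_eval {𝕜 σ : Type*} [NontriviallyNormedField 𝕜] [Fintype σ]
    (p : MvPolynomial σ 𝕜) (x : σ → 𝕜) :
    HasFDerivAt (fun y => eval y p)
      (∑ j, eval x (pderiv j p) • (ContinuousLinearMap.proj j : (σ → 𝕜) →L[𝕜] 𝕜)) x := by
  classical
  induction p using MvPolynomial.induction_on with
  | C c =>
    simp only [eval_C]
    exact (hasFDerivAt_const (𝕜 := 𝕜) c x).congr_fderiv (by ext; simp)
  | add p q hp hq =>
    simp only [map_add]
    exact (hp.add hq).congr_fderiv (by ext; simp [add_mul, Finset.sum_add_distrib])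
  | mul_X p i hp =>
    simp only [map_mul, eval_X]
    refine (hp.mul ((ContinuousLinearMap.proj i : (σ → 𝕜) →L[𝕜] 𝕜).hasFDerivAt)).congr_fderiv ?_
    ext v
    simp [Derivation.leibniz, pderiv_X, Pi.single_apply, add_mul, Finset.sum_add_distrib,
      Finset.mul_sum, mul_assoc, apply_ite (eval x)]

theorem eval_pderiv_eq_zero_of_isMaxOn_Icc {a b x : Fin n → ℝ} {φ : MvPolynomial (Fin n) ℝ}
    (hmax : IsMaxOn (fun y => eval y φ) (Icc a b) x) (hx : x ∈ Icc a b) {j : Fin n}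
    (ha : x j ≠ a j) (hb : x j ≠ b j) : eval x (pderiv j φ) = 0 := by
  have hline :
      HasDerivAt (fun s => eval (Function.update x j s) φ) (eval x (pderiv j φ)) (x j) := by
    have hx' : x = Function.update x j (x j) := (Function.update_eq_self j x).symm
    have := HasFDerivAt.comp_hasDerivAt (x j) (hx' ▸ hasFDerivAt_mvPolynomial_eval φ x)
      (hasDerivAt_update x j (x j))
    exact this.congr_deriv (by simp [Pi.single_apply])
  refine IsLocalMax.hasDerivAt_eq_zero ?_ hline
  filter_upwards [Icc_mem_nhds ((hx.1 j).lt_of_ne' ha) ((hx.2 j).lt_of_ne hb)] with s hs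
  rw [Function.update_eq_self]
  exact hmax ⟨le_update_iff.2 ⟨hs.1, fun i _ => hx.1 i⟩, update_le_iff.2 ⟨hs.2, fun i _ => hx.2 i⟩⟩

theorem exists_hyperreal_isMaxOn (Φ : MvPolynomial (Fin n) ℝ*) {a b : Fin n → ℝ} (hab : a ≤ b) :
    ∃ x : Fin n → ℝ*, (∀ j, (a j : ℝ*) ≤ x j ∧ x j ≤ b j) ∧
      (∀ y : Fin n → ℝ*, (∀ j, (a j : ℝ*) ≤ y j ∧ y j ≤ b j) → eval y Φ ≤ eval x Φ) ∧
      ∀ j, x j ≠ a j → x j ≠ b j → eval x (pderiv j Φ) = 0 := by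
  obtain ⟨φ, hφ⟩ := exists_seq_mvPolynomial_ofSeq_eq Φ
  choose x hx hmax using fun i => isCompact_Icc.exists_isMaxOn (nonempty_Icc.2 hab)
    (MvPolynomial.continuous_eval (φ i)).continuousOn
  refine ⟨fun j => Hyperreal.ofSeq fun i => x i j, fun j => ⟨?_, ?_⟩, fun y hy => ?_,
    fun j ha hb => ?_⟩
  · exact Hyperreal.ofSeq_le_ofSeq (f := fun _ => a j).2 (.of_forall fun i => (hx i).1 j)
  · exact Hyperreal.ofSeq_le_ofSeq (g := fun _ => b j).2 (.of_forall fun i => (hx i).2 j)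
  · choose u hu using fun j => Hyperreal.ofSeq_surjective (y j)
    obtain rfl : (fun j => Hyperreal.ofSeq (u j)) = y := funext hu
    rw [(hφ x).1, (hφ fun i j => u j i).1, Hyperreal.ofSeq_le_ofSeq]
    have hlow : ∀ᶠ i in hyperfilter ℕ, ∀ j, a j ≤ u j i := eventually_all.2 fun j =>
      Hyperreal.ofSeq_le_ofSeq (f := fun _ => a j).1 (hy j).1
    have hupp : ∀ᶠ i in hyperfilter ℕ, ∀ j, u j i ≤ b j := eventually_all.2 fun j =>
      Hyperreal.ofSeq_le_ofSeq (g := fun _ => b j).1 (hy j).2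
    filter_upwards [hlow, hupp] with i hi₁ hi₂
    exact hmax i ⟨hi₁, hi₂⟩
  · rw [(hφ x).2 j]
    have ha' : ∀ᶠ i in hyperfilter ℕ, x i j ≠ a j :=
      Ultrafilter.eventually_not.2 fun h => ha (Germ.coe_eq.2 h)
    have hb' : ∀ᶠ i in hyperfilter ℕ, x i j ≠ b j :=
      Ultrafilter.eventually_not.2 fun h => hb (Germ.coe_eq.2 h)
    refine Germ.coe_eq.2 ?_
    filter_upwards [ha', hb'] with i hi₁ hi₂
    exact eval_pderiv_eq_zero_of_isMaxOn_Icc (hmax i) (hx i) hi₁ hi₂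

end Transfer

section UniformizerExistence

open ArchimedeanClass MvPolynomial IntermediateField

variable {K : Type*} [Field K] [LinearOrder K] [IsStrictOrderedRing K] [Algebra ℝ K]

theorem exists_isUniformizer_of_isScaleFamily {n D : ℕ} {t : K} {ζ x : Fin n → K}
    (hζ : IsScaleFamily t ζ) (ht₀ : t ≠ 0) (ht : 0 < mk t) (hD : 0 < D)
    {F : Fin n → MvPolynomial (Fin n) ℝ⟮t⟯} (hF : ∀ j, (F j).totalDegree ≤ D)
    (hFx : ∀ j, aeval x (F j) = ζ j) :
    ∃ L : IntermediateField ℝ K, (∀ j, x j ∈ L) ∧ ∃ π, IsUniformizer L π ∧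
      ∃ e : ℕ, 1 ≤ e ∧ e ≤ D ^ n ∧ mk t = e • mk π := by
  let L : IntermediateField ℝ K :=
    (IntermediateField.adjoin ℝ⟮t⟯ (range x)).restrictScalars ℝ
  have hxL (j : Fin n) : x j ∈ L := subset_adjoin ℝ⟮t⟯ _ (mem_range_self j)
  have htL : t ∈ L := IntermediateField.algebraMap_mem (IntermediateField.adjoin ℝ⟮t⟯ (range x))
    (⟨t, mem_adjoin_simple_self ℝ t⟩ : ℝ⟮t⟯)
  refine ⟨L, hxL, exists_isUniformizer htL ht₀ ht fun y hy hy₀ hyt => ?_⟩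
  rw [← Fintype.card_fin n, ← Finset.card_univ, ← Finset.prod_const]
  refine isCommensurable_archVal_of_independent (F := F)
    (fun c hc => archVal_mem_zmultiples_of_mem_adjoin ht₀ ht c.2 (by simpa using hc))
    (fun _ => hD) hF (fun j => hFx j ▸ (hζ.pos j).ne') (fun c hc => ?_) hy hy₀ hyt
  simp only [hFx] at hc
  exact eq_zero_of_mk_le_mk_sum_zsmul hζ.strictMono hζ.mk_archVal_lt hc

theorem exists_isUniformizer_of_aeval_eq_zero {x : Fin 2 → K} {f Q : MvPolynomial (Fin 2) ℝ}
    {d₁ d₂ : ℕ} (hd₁ : 0 < d₁) (hd₂ : 0 < d₂) (hf : f.totalDegree ≤ d₁) (hQ : Q.totalDegree ≤ d₂)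
    (hfx₀ : aeval x f ≠ 0) (hfx : 0 < mk (aeval x f)) (hQ₀ : Q ≠ 0) (hQx : aeval x Q = 0) :
    ∃ L : IntermediateField ℝ K, (∀ j, x j ∈ L) ∧ ∃ π, IsUniformizer L π ∧
      ∃ e : ℕ, 1 ≤ e ∧ e ≤ d₁ * d₂ ∧ mk (aeval x f) = e • mk π := by
  have hxL (j : Fin 2) : x j ∈ IntermediateField.adjoin ℝ (range x) :=
    subset_adjoin ℝ _ (mem_range_self j)
  refine ⟨_, hxL, exists_isUniformizer ?_ hfx₀ hfx fun y hy hy₀ _ =>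
    isCommensurable_archVal_of_aeval_eq_zero (fun c hc => ?_) hd₁ hd₂ hf hQ
      ((archVal_pos hfx₀).2 hfx).ne' hQ₀ hQx hy hy₀⟩
  · exact algebra_adjoin_le_adjoin ℝ _ (Algebra.adjoin_range_eq_range_aeval ℝ x ▸ ⟨f, rfl⟩)
  · rw [← archVal_one, archVal_eq_archVal (by simpa using hc) one_ne_zero, mk_one,
      mk_algebraMap_real hc]

end UniformizerExistence

section Degrees

open MvPolynomial

theorem totalDegree_pderiv_le {R σ : Type*} [CommSemiring R] (j : σ) (p : MvPolynomial σ R) :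
    (pderiv j p).totalDegree ≤ p.totalDegree - 1 := by
  classical
  refine Finset.sup_le fun s hs => ?_
  have hs' : s + Finsupp.single j 1 ∈ p.support := by
    rw [mem_support_iff, coeff_pderiv] at hs
    exact mem_support_iff.2 (left_ne_zero_of_mul hs)
  have hdeg := le_totalDegree hs'
  rw [Finsupp.sum_add_index' (by simp) (by simp)] at hdeg
  simp only [Finsupp.sum_single_index] at hdeg
  omega

theorem totalDegree_aeval_le {R σ τ : Type*} [CommSemiring R] {φ : σ → MvPolynomial τ R}
    (hφ : ∀ j, (φ j).totalDegree ≤ 1) (p : MvPolynomial σ R) :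
    (aeval φ p).totalDegree ≤ p.totalDegree := by
  rw [aeval_def, eval₂_eq]
  refine totalDegree_finsetSum_le fun s hs => (totalDegree_mul _ _).trans ?_
  rw [algebraMap_eq, totalDegree_C, zero_add]
  refine (totalDegree_finsetProd _ _).trans (le_trans ?_ (le_totalDegree hs))
  refine Finset.sum_le_sum fun j _ => (totalDegree_pow _ _).trans ?_
  simpa using Nat.mul_le_mul_left (s j) (hφ j)

theorem totalDegree_gradSq_le {R σ : Type*} [CommSemiring R] [Fintype σ] (p : MvPolynomial σ R) :
    (gradSq p).totalDegree ≤ 2 * (p.totalDegree - 1) :=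
  totalDegree_finsetSum_le fun j _ =>
    (totalDegree_pow _ _).trans (Nat.mul_le_mul_left 2 (totalDegree_pderiv_le j p))

end Degrees

section Exponent

/-- The number `R` for which `1 - 1 / R` bounds the Łojasiewicz exponent of a polynomial of degree
at most `k` in `m` variables. The subtractions are truncated, so that `R` is `2 * k` for `m = 1`. -/
def lojasiewiczDenom (k m : ℕ) : ℕ :=
  max (k * (3 * k - 4) ^ (m - 1)) (2 * k * (3 * k - 3) ^ (m - 2))

theorem four_le_lojasiewiczDenom {k : ℕ} (hk : 2 ≤ k) (m : ℕ) : 4 ≤ lojasiewiczDenom k m := by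
  have hpow : 1 ≤ (3 * k - 3) ^ (m - 2) := Nat.one_le_pow _ _ (by omega)
  exact le_max_of_le_right (by nlinarith)

theorem lojasiewiczDenom_mono {k : ℕ} (hk : 2 ≤ k) : Monotone (lojasiewiczDenom k) := by
  intro m n hmn
  unfold lojasiewiczDenom
  gcongr <;> omega

theorem mul_le_lojasiewiczDenom_two (k : ℕ) : k * (3 * k - 4) ≤ lojasiewiczDenom k 2 :=
  le_max_of_le_left (by simp)

theorem pow_add_two_le_lojasiewiczDenom {k : ℕ} (hk : 2 ≤ k) {m : ℕ} (hm : 1 ≤ m) (hm₂ : m ≠ 2) :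
    (2 * k - 3) ^ m + 2 ≤ lojasiewiczDenom k m := by
  obtain ⟨j, rfl⟩ := Nat.exists_eq_add_of_le' hk
  have h₂ : 2 * (j + 2) - 3 = 2 * j + 1 := by omega
  have h₃ : 3 * (j + 2) - 4 = 3 * j + 2 := by omega
  rw [h₂]
  obtain rfl | hm₁ := hm.eq_or_lt
  · exact le_max_of_le_right (by simp; omega)
  · refine le_max_of_le_left ?_
    rw [h₃]
    induction m, (show 3 ≤ m by omega) using Nat.le_induction with
    | base => norm_num; nlinarith [Nat.zero_le (j ^ 3)]
    | succ m hm ih =>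
      have ih := ih (by omega) (by omega) (by omega)
      have hpow : (3 * j + 2) ^ (m + 1 - 1) = (3 * j + 2) ^ (m - 1) * (3 * j + 2) := by
        rw [← pow_succ, Nat.sub_add_comm (by omega)]
      calc (2 * j + 1) ^ (m + 1) + 2 ≤ ((2 * j + 1) ^ m + 2) * (2 * j + 1) := by
            rw [pow_succ]; nlinarith
        _ ≤ (j + 2) * (3 * j + 2) ^ (m - 1) * (3 * j + 2) := Nat.mul_le_mul ih (by omega)
        _ = (j + 2) * (3 * j + 2) ^ (m + 1 - 1) := by rw [hpow, mul_assoc]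

end Exponent

section Violation

open ArchimedeanClass MvPolynomial

theorem aeval_gradSq {R A σ : Type*} [CommSemiring R] [CommSemiring A] [Algebra R A] [Fintype σ]
    (f : MvPolynomial σ R) (x : σ → A) :
    aeval x (gradSq f) = ∑ j, aeval x (pderiv j f) ^ 2 := by
  simp only [gradSq, map_sum, map_pow]

variable {K : Type*} [Field K] [LinearOrder K] [IsStrictOrderedRing K]

theorem nsmul_mk_lt_iff {x y : K} (hx : x ≠ 0) (hy : y ≠ 0) {m n : ℕ} :
    m • mk x < n • mk y ↔ m • archVal x < n • archVal y := by
  rw [← not_le, ← not_le, nsmul_mk_le_iff hy hx]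

variable [Algebra ℝ K] {σ : Type*} [Fintype σ] {R : ℕ}

theorem aeval_gradSq_nonneg (f : MvPolynomial σ ℝ) (x : σ → K) : 0 ≤ aeval x (gradSq f) :=
  aeval_gradSq f x ▸ Finset.sum_nonneg fun _ _ => sq_nonneg _

/-- A finite point `x` of `K ^ σ` at which `f` is a positive infinitesimal and which witnesses the
failure of the Łojasiewicz inequality `|∇f|² ≥ c f ^ (2 - 2 / R)`, for every real `c > 0`. -/
structure ViolatesLojasiewicz (R : ℕ) (f : MvPolynomial σ ℝ) (x : σ → K) : Prop where intro ::
  finite : ∀ j, 0 ≤ ArchimedeanClass.mk (x j)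
  pos : 0 < aeval x f
  infinitesimal : 0 < ArchimedeanClass.mk (aeval x f)
  lt : (2 * R - 2) • ArchimedeanClass.mk (aeval x f) <
    R • ArchimedeanClass.mk (aeval x (gradSq f))

theorem ViolatesLojasiewicz.exists_restrict {m : ℕ} {f : MvPolynomial (Fin (m + 1)) ℝ}
    {x : Fin (m + 1) → K} (hx : ViolatesLojasiewicz R f x) {j : Fin (m + 1)} {r : ℝ}
    (hj : x j = algebraMap ℝ K r) :
    ∃ g : MvPolynomial (Fin m) ℝ, g.totalDegree ≤ f.totalDegree ∧
      ViolatesLojasiewicz R g fun i => x (j.succAbove i) := by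
  obtain ⟨φ, hφ⟩ : ∃ φ : Fin (m + 1) → MvPolynomial (Fin m) ℝ, φ = j.insertNth (C r) X := ⟨_, rfl⟩
  have hφj : φ j = C r := by simp [hφ]
  have hφi (i : Fin m) : φ (j.succAbove i) = X i := by simp [hφ]
  have haeval (p : MvPolynomial (Fin (m + 1)) ℝ) :
      aeval (fun i => x (j.succAbove i)) (aeval φ p) = aeval x p := by
    rw [comp_aeval_apply (R := ℝ) φ (aeval (R := ℝ) fun i => x (j.succAbove i))]
    congr 2
    ext l
    induction l using j.succAboveCases with
    | x => simp [hφj, hj]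
    | p i => simp [hφi]
  have hpderiv (i : Fin m) : pderiv i (aeval φ f) = aeval φ (pderiv (j.succAbove i) f) := by
    rw [derivation_aeval_eq_sum_pderiv, Fin.sum_univ_succAbove _ j, hφj]
    simp [hφi, pderiv_X, Pi.single_apply]
  refine ⟨aeval φ f, totalDegree_aeval_le (fun l => ?_) f, fun i => hx.finite _, ?_, ?_, ?_⟩
  · induction l using j.succAboveCases with
    | x => simp [hφj]
    | p i => simp [hφi]
  · rw [haeval]; exact hx.pos
  · rw [haeval]; exact hx.infinitesimal
  · rw [haeval]
    refine hx.lt.trans_le (nsmul_le_nsmul_right (mk_antitoneOn (aeval_gradSq_nonneg _ _)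
      (aeval_gradSq_nonneg _ _) ?_) R)
    rw [aeval_gradSq, aeval_gradSq, Fin.sum_univ_succAbove _ j]
    simp only [hpderiv, haeval]
    exact le_add_of_nonneg_left (sq_nonneg _)

end Violation

section PerturbedMaximizers

open ArchimedeanClass MvPolynomial

theorem le_mk_sum_mul_sub {K ι : Type*} [Field K] [LinearOrder K] [IsStrictOrderedRing K]
    [Fintype ι] {c : ArchimedeanClass K} {ζ x y : ι → K} (hζ : ∀ j, c ≤ mk (ζ j))
    (hx : ∀ j, 0 ≤ mk (x j)) (hy : ∀ j, 0 ≤ mk (y j)) : c ≤ mk (∑ j, ζ j * (x j - y j)) :=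
  le_mk_sum fun j _ => by
    rw [mk_mul, sub_eq_add_neg]
    exact le_add_of_le_of_nonneg (hζ j) (le_mk_add (hx j) ((mk_neg (y j)).symm ▸ hy j))

theorem IsScaleFamily.nsmul_mk_le {K : Type*} [Field K] [LinearOrder K] [IsStrictOrderedRing K]
    {n : ℕ} {t : K} {ζ : Fin n → K} (hζ : IsScaleFamily t ζ) (ht₀ : t ≠ 0) (a : ℕ) (j : Fin n) :
    a • ArchimedeanClass.mk t ≤ ArchimedeanClass.mk (ζ j) := by
  have hζ₀ := (hζ.pos j).ne'
  have hlt := ArchimedeanClass.mk_lt_mk.1 (hζ.mk_archVal_lt j) a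
  rw [abs_of_pos ((archVal_pos hζ₀).2 (hζ.mk_pos j))] at hlt
  have hle := (nsmul_le_nsmul_right (le_abs_self (archVal t)) a).trans hlt.le
  simpa using (nsmul_mk_le_iff ht₀ hζ₀ (m := a) (n := 1)).2 (by simpa using hle)

/-- The hyperreals as an algebra over the reals, through the canonical embedding. -/
instance hyperrealAlgebra : Algebra ℝ ℝ* := Hyperreal.coeRingHom.toAlgebra

theorem exists_perturbed_max {n : ℕ} (Φ : MvPolynomial (Fin n) ℝ*) (ζ : Fin n → ℝ*)
    {z : Fin n → ℝ*} (hz : ∀ j, 0 ≤ mk (z j)) {r : ℝ} (hr : 0 < r) :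
    ∃ x : Fin n → ℝ*, (∀ j, 0 ≤ mk (x j)) ∧ (∀ j, |stdPart (x j) - stdPart (z j)| ≤ r) ∧
      eval z Φ ≤ eval x Φ + ∑ j, ζ j * (z j - x j) ∧
      ((∀ j (s : ℝ), x j ≠ algebraMap ℝ ℝ* s) → ∀ j, eval x (pderiv j Φ) = ζ j) := by
  obtain ⟨x, hx, hmax, hcrit⟩ := exists_hyperreal_isMaxOn (Φ - ∑ j, C (ζ j) * X j)
    (a := fun j => stdPart (z j) - r) (b := fun j => stdPart (z j) + r)
    (fun j => by dsimp only; linarith)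
  have hxfin (j : Fin n) : 0 ≤ mk (x j) :=
    mk_nonneg_of_le_of_le_of_archimedean (realOrderRingHom ℝ*) (hx j).1 (hx j).2
  refine ⟨x, hxfin, fun j => ?_, ?_, fun hreal j => ?_⟩
  · have hlow := le_stdPart_of_le (realOrderRingHom ℝ*) (hxfin j) (hx j).1
    have hupp := stdPart_le_of_le (realOrderRingHom ℝ*) (hxfin j) (hx j).2
    exact abs_le.2 ⟨by linarith, by linarith⟩
  · have hle := hmax z fun j => ⟨(lt_of_lt_stdPart (realOrderRingHom ℝ*) (hz j) (by linarith)).le,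
      (lt_of_stdPart_lt (realOrderRingHom ℝ*) (hz j) (by linarith)).le⟩
    simp only [map_sub, map_sum, map_mul, eval_C, eval_X] at hle
    simp only [mul_sub, Finset.sum_sub_distrib]
    linarith
  · have := hcrit j (hreal j _) (hreal j _)
    simpa [pderiv_X, Pi.single_apply, Derivation.leibniz, sub_eq_zero] using this

end PerturbedMaximizers

section IsolatedZeros

open ArchimedeanClass MvPolynomial
open scoped IntermediateField

variable {n R : ℕ} {f : MvPolynomial (Fin n) ℝ}

theorem IsScaleFamily.mk_aeval_gradSq_lt {K : Type*} [Field K] [LinearOrder K]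
    [IsStrictOrderedRing K] [Algebra ℝ K] {t : K} {ζ x : Fin n → K} (hζ : IsScaleFamily t ζ)
    (ht₀ : t ≠ 0) (ht : 0 < ArchimedeanClass.mk t) (hx : ∀ j, 0 ≤ ArchimedeanClass.mk (x j))
    (hfx : ArchimedeanClass.mk (aeval x f) = ArchimedeanClass.mk t)
    {F : Fin n → MvPolynomial (Fin n) ℝ⟮t⟯} (hF : ∀ j, aeval x (F j) = ζ j) :
    ArchimedeanClass.mk (aeval x (gradSq f)) < 2 • ArchimedeanClass.mk t := by
  obtain ⟨L, hxL, π, hπ, e, he, -, hte⟩ := exists_isUniformizer_of_isScaleFamily hζ ht₀ ht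
    (D := ∑ j, (F j).totalDegree + 1) (Nat.succ_pos _)
    (fun j => (Finset.single_le_sum (f := fun j => (F j).totalDegree)
      (fun _ _ => Nat.zero_le _) (Finset.mem_univ j)).trans (Nat.le_succ _)) hF
  refine (hπ.mk_aeval_gradSq_le hxL hx he (hfx.trans hte)).trans_lt ?_
  rw [hte, ← mul_nsmul']
  exact strictMono_nsmul_mk hπ.ne_zero hπ.mk_pos (by omega)

theorem mk_lt_mk_of_four_nsmul_le_two_nsmul {K : Type*} [Field K] [LinearOrder K]
    [IsStrictOrderedRing K] {s t : K} (ht₀ : t ≠ 0) (ht : 0 < mk t)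
    (hs : 4 • mk t ≤ 2 • mk s) : mk t < mk s := by
  obtain rfl | hs₀ := eq_or_ne s 0
  · exact mk_zero (M := K) ▸ lt_top_iff_ne_top.2 (mk_eq_top_iff.not.2 ht₀)
  · rw [nsmul_mk_le_iff ht₀ hs₀] at hs
    have htv := (archVal_pos ht₀).2 ht
    exact (archVal_lt_archVal ht₀ hs₀).1 (by grind)

theorem ViolatesLojasiewicz.of_four_nsmul_le {K σ : Type*} [Field K] [LinearOrder K]
    [IsStrictOrderedRing K] [Algebra ℝ K] [Fintype σ] {f : MvPolynomial σ ℝ} {x : σ → K} {t : K}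
    (hR : 2 ≤ R) (hx : ∀ j, 0 ≤ mk (x j)) (ht₀ : 0 < t) (ht : 0 < mk t)
    (hft : 4 • mk t ≤ 2 • mk (t - aeval x f)) (hGx : 4 • mk t ≤ mk (aeval x (gradSq f))) :
    ViolatesLojasiewicz R f x ∧ mk (aeval x f) = mk t := by
  have hft' : mk t < mk (t - aeval x f) := mk_lt_mk_of_four_nsmul_le_two_nsmul ht₀.ne' ht hft
  have hmk : mk (aeval x f) = mk t := mk_eq_mk_of_lt_mk_sub hft'
  refine ⟨⟨hx, by linarith [lt_of_mk_lt_mk_of_nonneg hft' ht₀.le], hmk ▸ ht, ?_⟩, hmk⟩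
  rw [hmk]
  refine lt_of_lt_of_le ?_ (nsmul_le_nsmul_right hGx R)
  rw [← mul_nsmul']
  exact strictMono_nsmul_mk ht₀.ne' ht (by omega)

theorem aeval_gradSq_ne_zero_of_forall_ne_algebraMap (hR : 2 ≤ R)
    (hreal : ∀ x : Fin n → ℝ*, ViolatesLojasiewicz R f x → ∀ j (s : ℝ), x j ≠ algebraMap ℝ ℝ* s)
    {z : Fin n → ℝ*} (hz : ∀ j, 0 ≤ mk (z j)) (hfz₀ : 0 < aeval z f) (hfz : 0 < mk (aeval z f)) :
    aeval z (gradSq f) ≠ 0 := by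
  intro hGz
  obtain ⟨t, ht⟩ : ∃ t, t = aeval z f := ⟨_, rfl⟩
  rw [← ht] at hfz₀ hfz
  obtain ⟨ζ, hζ⟩ := exists_isScaleFamily hfz₀ hfz n
  obtain ⟨x, hx, -, hmax, hcrit⟩ := exists_perturbed_max
    (-(map (algebraMap ℝ ℝ*) (gradSq f) + (map (algebraMap ℝ ℝ*) f - C t) ^ 2)) ζ hz one_pos
  simp only [map_neg, map_add, map_sub, map_pow, eval_C, eval_map, ← aeval_def, hGz,
    ← ht, sub_self] at hmax
  have hG₀ := aeval_gradSq_nonneg f x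
  have hsq := sq_nonneg (aeval x f - t)
  have hδ : 4 • mk t ≤ mk (∑ j, ζ j * (z j - x j)) :=
    le_mk_sum_mul_sub (hζ.nsmul_mk_le hfz₀.ne' 4) hz hx
  have hGx : 4 • mk t ≤ mk (aeval x (gradSq f)) :=
    hδ.trans (mk_antitoneOn hG₀ (hG₀.trans (by linarith)) (by linarith))
  have hft : 4 • mk t ≤ 2 • mk (t - aeval x f) := by
    rw [mk_sub_comm]
    exact (hδ.trans (mk_antitoneOn hsq (hsq.trans (by linarith)) (by linarith))).trans_eq
      (mk_pow 2 _)
  obtain ⟨hviol, hmk⟩ := ViolatesLojasiewicz.of_four_nsmul_le hR hx hfz₀ hfz hft hGx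
  refine (hζ.mk_aeval_gradSq_lt (F := fun j => -(map (algebraMap ℝ ℝ⟮t⟯) (pderiv j (gradSq f)) +
    2 * (map (algebraMap ℝ ℝ⟮t⟯) f - C (IntermediateField.AdjoinSimple.gen ℝ t)) *
      map (algebraMap ℝ ℝ⟮t⟯) (pderiv j f))) hfz₀.ne' hfz hx hmk fun j => ?_).not_ge
    ((nsmul_le_nsmul_left hfz.le (by norm_num)).trans hGx)
  rw [← hcrit (hreal x hviol) j]
  simp only [pderiv_map, map_neg, map_add, map_sub, map_mul, map_pow, Derivation.leibniz_pow,
    pderiv_C, aeval_map_algebraMap, aeval_C, IntermediateField.AdjoinSimple.algebraMap_gen,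
    eval_map, ← aeval_def, eval_C, nsmul_eq_mul, smul_eq_mul, map_ofNat, map_zero,
    Nat.cast_ofNat]
  ring

end IsolatedZeros

section StandardParts

open ArchimedeanClass MvPolynomial

variable {K : Type*} [Field K] [LinearOrder K] [IsStrictOrderedRing K] [Algebra ℝ K]

theorem stdPart_mvPolynomial_aeval {σ : Type*} [Finite σ] {z : σ → K} (hz : ∀ j, 0 ≤ mk (z j))
    (p : MvPolynomial σ ℝ) : stdPart (aeval z p) = eval (fun j => stdPart (z j)) p := by
  cases nonempty_fintype σ
  have hc := le_mk_aeval_sub_aeval hz (fun j => mk_algebraMap_real_nonneg (stdPart (z j)))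
    (c := Finset.univ.inf fun j => mk (z j - algebraMap ℝ K (stdPart (z j))))
    (fun j => Finset.inf_le (Finset.mem_univ j)) p
  have hpos : 0 < mk (aeval z p - algebraMap ℝ K (eval (fun j => stdPart (z j)) p)) := by
    have hconst := aeval_algebraMap_apply K (fun j => stdPart (z j)) p
    rw [aeval_eq_eval] at hconst
    refine lt_of_lt_of_le ((Finset.lt_inf_iff ?_).2 fun j _ =>
      mk_sub_algebraMap_stdPart_pos (hz j)) (hconst ▸ hc)
    exact lt_top_iff_ne_top.2 (mk_one (R := K) ▸ mk_eq_top_iff.not.2 one_ne_zero)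
  rw [← sub_add_cancel (aeval z p) (algebraMap ℝ K _), stdPart_add_eq_right hpos]
  exact stdPart_map_real (realOrderRingHom K) _

end StandardParts

section ExtremalPoints

open ArchimedeanClass MvPolynomial

theorem aeval_hyperreal_ofSeq {σ : Type*} (u : ℕ → σ → ℝ) (p : MvPolynomial σ ℝ) :
    aeval (fun j => Hyperreal.ofSeq fun i => u i j) p = Hyperreal.ofSeq fun i => eval (u i) p := by
  induction p using MvPolynomial.induction_on with
  | C c => simp only [algHom_C, eval_C]; rfl
  | add p q hp hq => simp only [map_add, hp, hq]; rfl
  | mul_X p j hp => simp only [map_mul, aeval_X, eval_X, hp]; rfl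

variable {n R : ℕ} {f : MvPolynomial (Fin n) ℝ}

theorem mk_ofSeq_nonneg_of_tendsto {u : ℕ → ℝ} {a : ℝ} (hu : Tendsto u atTop (𝓝 a)) :
    0 ≤ mk (Hyperreal.ofSeq u) :=
  Hyperreal.archimedeanClassMk_nonneg_of_tendsto
    (Hyperreal.tendsto_ofSeq.2 (hu.mono_left Nat.hyperfilter_le_atTop))

theorem mk_ofSeq_pos_of_tendsto_zero {u : ℕ → ℝ} (hu : Tendsto u atTop (𝓝 0)) :
    0 < mk (Hyperreal.ofSeq u) :=
  Hyperreal.archimedeanClassMk_pos_of_tendsto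
    (Hyperreal.tendsto_ofSeq.2 (hu.mono_left Nat.hyperfilter_le_atTop))

theorem exists_forall_eval_gradSq_eq_zero_imp_eval_nonpos (hR : 2 ≤ R)
    (hreal : ∀ x : Fin n → ℝ*, ViolatesLojasiewicz R f x → ∀ j (s : ℝ), x j ≠ algebraMap ℝ ℝ* s)
    {a : Fin n → ℝ} (ha : eval a f = 0) :
    ∃ r > 0, ∀ y : Fin n → ℝ, (∀ j, |y j - a j| ≤ r) → eval y (gradSq f) = 0 → eval y f ≤ 0 := by
  by_contra! h
  choose u hua hGu hfu using fun i : ℕ => h (1 / ((i : ℝ) + 1)) Nat.one_div_pos_of_nat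
  have hu : Tendsto u atTop (𝓝 a) := tendsto_pi_nhds.2 fun j => tendsto_iff_dist_tendsto_zero.2 <|
    squeeze_zero (fun _ => dist_nonneg) (fun i => hua i j) tendsto_one_div_add_atTop_nhds_zero_nat
  have hf : Tendsto (fun i => eval (u i) f) atTop (𝓝 0) :=
    ha ▸ ((MvPolynomial.continuous_eval f).tendsto a).comp hu
  refine aeval_gradSq_ne_zero_of_forall_ne_algebraMap hR hreal
    (z := fun j => Hyperreal.ofSeq fun i => u i j)
    (fun j => mk_ofSeq_nonneg_of_tendsto (tendsto_pi_nhds.1 hu j)) ?_ ?_ ?_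
  · rw [aeval_hyperreal_ofSeq]
    exact Hyperreal.ofSeq_lt_ofSeq (f := fun _ => 0).2 (.of_forall hfu)
  · rw [aeval_hyperreal_ofSeq]
    exact mk_ofSeq_pos_of_tendsto_zero hf
  · rw [aeval_hyperreal_ofSeq, funext hGu]
    rfl

theorem ViolatesLojasiewicz.exists_slope {K σ : Type*} [Field K] [LinearOrder K]
    [IsStrictOrderedRing K] [Algebra ℝ K] [Fintype σ] {f : MvPolynomial σ ℝ} {z : σ → K}
    (hz : ViolatesLojasiewicz R f z) (hR : 4 ≤ R) (hGz : aeval z (gradSq f) ≠ 0) :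
    ∃ τ : K, 0 < τ ∧ 0 < mk τ ∧ τ * aeval z f = 4 * aeval z (gradSq f) ∧
      (R - 2) • mk (aeval z f) < R • mk τ ∧ mk (aeval z (gradSq f)) < 4 • mk τ := by
  have hG := (aeval_gradSq_nonneg f z).lt_of_ne' hGz
  obtain ⟨τ, hτ⟩ : ∃ τ, τ = 4 * aeval z (gradSq f) / aeval z f := ⟨_, rfl⟩
  have hτ₀ : 0 < τ := hτ ▸ div_pos (by positivity) hz.pos
  have hmul : τ * aeval z f = 4 * aeval z (gradSq f) := hτ ▸ div_mul_cancel₀ _ hz.pos.ne'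
  have hval : archVal τ + archVal (aeval z f) = archVal (aeval z (gradSq f)) := by
    rw [← archVal_mul hτ₀.ne' hz.pos.ne', hmul, archVal_eq_archVal (by positivity) hGz, mk_mul]
    simp
  have hfv := (archVal_pos hz.pos.ne').2 hz.infinitesimal
  have hlt := (nsmul_mk_lt_iff hz.pos.ne' hGz).1 hz.lt
  obtain ⟨N, rfl⟩ := Nat.exists_eq_add_of_le' hR
  have hslope : (N + 2) • archVal (aeval z f) < (N + 4) • archVal τ := by
    rw [← hval, nsmul_add, show 2 * (N + 4) - 2 = N + 2 + (N + 4) by omega, add_nsmul] at hlt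
    exact lt_of_add_lt_add_right hlt
  have hτv : 0 < archVal τ := by
    by_contra! h
    exact hslope.not_ge ((nsmul_nonpos h _).trans (nsmul_nonneg hfv.le _))
  have hdouble : archVal (aeval z f) < 2 • archVal τ := by
    refine lt_of_nsmul_lt_nsmul_right (N + 2) (hslope.trans_le ?_)
    rw [← mul_nsmul']
    exact nsmul_le_nsmul_left hτv.le (by omega)
  refine ⟨τ, hτ₀, (archVal_pos hτ₀.ne').1 hτv, hmul,
    (nsmul_mk_lt_iff hz.pos.ne' hτ₀.ne').2 hslope, ?_⟩
  simpa using (nsmul_mk_lt_iff hGz hτ₀.ne' (m := 1) (n := 4)).2 (by grind)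

theorem mk_aeval_pos_of_mk_aeval_gradSq_pos {K σ : Type*} [Field K] [LinearOrder K]
    [IsStrictOrderedRing K] [Algebra ℝ K] [Fintype σ] {f : MvPolynomial σ ℝ} {a : σ → ℝ} {r : ℝ}
    (ha : ∀ y : σ → ℝ, (∀ j, |y j - a j| ≤ r) → eval y (gradSq f) = 0 → eval y f ≤ 0)
    {x : σ → K} (hx : ∀ j, 0 ≤ mk (x j)) (hxa : ∀ j, |stdPart (x j) - a j| ≤ r)
    (hfx : 0 ≤ aeval x f) (hGx : 0 < mk (aeval x (gradSq f))) : 0 < mk (aeval x f) := by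
  have hG := stdPart_eq_zero.2 hGx.ne'
  rw [stdPart_mvPolynomial_aeval hx] at hG
  have hf := ha _ hxa hG
  rw [← stdPart_mvPolynomial_aeval hx] at hf
  exact (mk_mvPolynomial_aeval_nonneg hx f).lt_of_ne'
    (stdPart_eq_zero.1 (hf.antisymm (stdPart_nonneg hfx)))

theorem ViolatesLojasiewicz.of_slope {K σ : Type*} [Field K] [LinearOrder K]
    [IsStrictOrderedRing K] [Algebra ℝ K] [Fintype σ] {f : MvPolynomial σ ℝ} {x : σ → K} {τ : K}
    (hx : ∀ j, 0 ≤ mk (x j)) (hfx₀ : 0 < aeval x f) (hfx : 0 < mk (aeval x f)) (hτ₀ : τ ≠ 0)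
    (hR : 2 ≤ R) (hslope : (R - 2) • mk (aeval x f) < R • mk τ)
    (hGx : mk (τ * aeval x f) ≤ mk (aeval x (gradSq f))) : ViolatesLojasiewicz R f x := by
  refine ⟨hx, hfx₀, hfx, lt_of_lt_of_le ?_ (nsmul_le_nsmul_right hGx R)⟩
  rw [nsmul_mk_lt_iff hfx₀.ne' (mul_ne_zero hτ₀ hfx₀.ne'), archVal_mul hτ₀ hfx₀.ne', nsmul_add,
    show 2 * R - 2 = R - 2 + R by omega, add_nsmul]
  exact add_lt_add_left ((nsmul_mk_lt_iff hfx₀.ne' hτ₀).1 hslope) _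

theorem ViolatesLojasiewicz.of_perturbed_max {K σ : Type*} [Field K] [LinearOrder K]
    [IsStrictOrderedRing K] [Algebra ℝ K] [Fintype σ] {f : MvPolynomial σ ℝ} {x z : σ → K} {τ δ : K}
    (hz : ViolatesLojasiewicz R f z) (hτ₀ : 0 < τ) (hτz : τ * aeval z f = 4 * aeval z (gradSq f))
    (hslope : (R - 2) • mk (aeval z f) < R • mk τ) (hδ : δ < aeval z (gradSq f))
    (hmax : τ * aeval z f - aeval z (gradSq f) ≤ τ * aeval x f - aeval x (gradSq f) + δ) :
    0 < aeval x f ∧ mk (τ * aeval x f) ≤ mk (aeval x (gradSq f)) ∧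
      (R - 2) • mk (aeval x f) < R • mk τ := by
  have hGx := aeval_gradSq_nonneg f x
  have hGz := aeval_gradSq_nonneg f z
  have hle : aeval z f ≤ 2 * aeval x f := le_of_mul_le_mul_left (by linarith) hτ₀
  refine ⟨by linarith [hz.pos], mk_antitoneOn hGx (hGx.trans (by linarith)) (by linarith),
    (nsmul_le_nsmul_right ?_ _).trans_lt hslope⟩
  simpa using mk_antitoneOn hz.pos.le (hz.pos.le.trans hle) hle

theorem ViolatesLojasiewicz.exists_extremal (hR : 4 ≤ R)
    (hreal : ∀ x : Fin n → ℝ*, ViolatesLojasiewicz R f x → ∀ j (s : ℝ), x j ≠ algebraMap ℝ ℝ* s)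
    {z : Fin n → ℝ*} (hz : ViolatesLojasiewicz R f z) :
    ∃ τ : ℝ*, 0 < τ ∧ 0 < ArchimedeanClass.mk τ ∧
      ∀ ζ : Fin n → ℝ*, (∀ j, 4 • ArchimedeanClass.mk τ ≤ ArchimedeanClass.mk (ζ j)) →
        ∃ x, ViolatesLojasiewicz R f x ∧
          ArchimedeanClass.mk (τ * aeval x f) ≤ ArchimedeanClass.mk (aeval x (gradSq f)) ∧
          (R - 2) • ArchimedeanClass.mk (aeval x f) < R • ArchimedeanClass.mk τ ∧
          ∀ j, τ * aeval x (pderiv j f) - aeval x (pderiv j (gradSq f)) = ζ j := by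
  have hGz := aeval_gradSq_ne_zero_of_forall_ne_algebraMap (by omega) hreal hz.finite hz.pos
    hz.infinitesimal
  obtain ⟨τ, hτ₀, hτ, hτz, hslope, hGτ⟩ := hz.exists_slope hR hGz
  refine ⟨τ, hτ₀, hτ, fun ζ hζ => ?_⟩
  have hfa : eval (fun j => stdPart (z j)) f = 0 := by
    rw [← stdPart_mvPolynomial_aeval hz.finite, stdPart_eq_zero]
    exact hz.infinitesimal.ne'
  obtain ⟨r, hr, hcrit⟩ :=
    exists_forall_eval_gradSq_eq_zero_imp_eval_nonpos (by omega) hreal hfa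
  obtain ⟨x, hx, hxz, hmax, hxζ⟩ := exists_perturbed_max
    (C τ * map (algebraMap ℝ ℝ*) f - map (algebraMap ℝ ℝ*) (gradSq f)) ζ hz.finite hr
  simp only [map_sub, map_mul, eval_C, eval_map, ← aeval_def, hτz] at hmax
  have hδ : ∑ j, ζ j * (z j - x j) < aeval z (gradSq f) := lt_of_mk_lt_mk_of_nonneg
    (hGτ.trans_le (le_mk_sum_mul_sub hζ hz.finite hx)) (aeval_gradSq_nonneg f z)
  obtain ⟨hfx₀, hGτx, hslope'⟩ := hz.of_perturbed_max hτ₀ hτz hslope hδ (hτz ▸ hmax)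
  have hGpos : 0 < mk (aeval x (gradSq f)) := hτ.trans_le <|
    (le_add_of_nonneg_right (mk_mvPolynomial_aeval_nonneg hx f)).trans (mk_mul τ _ ▸ hGτx)
  have hviol : ViolatesLojasiewicz R f x := .of_slope hx hfx₀
    (mk_aeval_pos_of_mk_aeval_gradSq_pos hcrit hx hxz hfx₀.le hGpos) hτ₀.ne' (by omega)
    hslope' hGτx
  refine ⟨x, hviol, hGτx, hslope', fun j => ?_⟩
  simpa only [map_sub, Derivation.leibniz, pderiv_C, pderiv_map, eval_map, ← aeval_def, mul_zero,
    add_zero, smul_eq_mul, map_mul, eval_C] using hxζ (hreal x hviol) j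

end ExtremalPoints

section NoViolation

open ArchimedeanClass MvPolynomial
open scoped IntermediateField

theorem totalDegree_map_le {R S σ : Type*} [CommSemiring R] [CommSemiring S] (φ : R →+* S)
    (p : MvPolynomial σ R) : (map φ p).totalDegree ≤ p.totalDegree :=
  Finset.sup_mono (support_map_subset φ p)

theorem mvPolynomial_aeval_mem_intermediateField {k K σ : Type*} [Field k] [Field K] [Algebra k K]
    {L : IntermediateField k K} {x : σ → K} (hx : ∀ j, x j ∈ L) (p : MvPolynomial σ k) :
    aeval x p ∈ L :=
  Algebra.adjoin_le (S := L.toSubalgebra) (range_subset_iff.2 hx)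
    (Algebra.adjoin_range_eq_range_aeval k x ▸ ⟨p, rfl⟩)

theorem not_violatesLojasiewicz_of_forall_ne_algebraMap {k R m : ℕ} {f : MvPolynomial (Fin m) ℝ}
    (hk : 2 ≤ k) (hf : f.totalDegree ≤ k) (hR : (2 * k - 3) ^ m + 2 ≤ R) (hR₄ : 4 ≤ R)
    (hreal : ∀ x : Fin m → ℝ*, ViolatesLojasiewicz R f x → ∀ j (s : ℝ), x j ≠ algebraMap ℝ ℝ* s)
    (z : Fin m → ℝ*) : ¬ ViolatesLojasiewicz R f z := by
  intro hz
  obtain ⟨τ, hτ₀, hτ, hext⟩ := hz.exists_extremal hR₄ hreal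
  obtain ⟨ζ, hζ⟩ := exists_isScaleFamily hτ₀ hτ m
  obtain ⟨x, hx, hGx, hslope, hcrit⟩ := hext ζ (hζ.nsmul_mk_le hτ₀.ne' 4)
  have hdeg (j : Fin m) : (C (IntermediateField.AdjoinSimple.gen ℝ τ) *
      map (algebraMap ℝ ℝ⟮τ⟯) (pderiv j f) -
        map (algebraMap ℝ ℝ⟮τ⟯) (pderiv j (gradSq f))).totalDegree ≤ 2 * k - 3 := by
    have h₁ := totalDegree_pderiv_le j f
    have h₂ := totalDegree_pderiv_le j (gradSq f)
    have h₃ := totalDegree_gradSq_le f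
    refine (totalDegree_sub _ _).trans (max_le ((totalDegree_mul _ _).trans ?_) ?_)
    · rw [totalDegree_C, zero_add]
      exact (totalDegree_map_le _ _).trans (by omega)
    · exact (totalDegree_map_le _ _).trans (by omega)
  obtain ⟨L, hxL, π, hπ, e, -, heR, hτe⟩ :=
    exists_isUniformizer_of_isScaleFamily (x := x) hζ hτ₀.ne' hτ (by omega) hdeg fun j => by
      simp only [← hcrit j, map_sub, map_mul, aeval_C, aeval_map_algebraMap,
        IntermediateField.AdjoinSimple.algebraMap_gen]
  have hmono := strictMono_nsmul_mk hπ.ne_zero hπ.mk_pos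
  rw [hτe, ← mul_nsmul'] at hslope
  obtain ⟨a, -, ha⟩ := hπ.exists_mk_eq_nsmul (mvPolynomial_aeval_mem_intermediateField hxL f)
    hx.infinitesimal.le
    ((le_self_nsmul hx.infinitesimal.le (by omega : R - 2 ≠ 0)).trans hslope.le)
  have ha₁ : 1 ≤ a := Nat.one_le_iff_ne_zero.2 fun h => by simpa [ha, h] using hx.infinitesimal
  have hea : e + a ≤ 2 * a - 2 := hmono.le_iff_le.1 <|
    calc (e + a) • ArchimedeanClass.mk π = ArchimedeanClass.mk (τ * aeval x f) := by
          rw [mk_mul, hτe, ha, add_nsmul]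
      _ ≤ ArchimedeanClass.mk (aeval x (gradSq f)) := hGx
      _ ≤ (2 * a - 2) • ArchimedeanClass.mk π := hπ.mk_aeval_gradSq_le hxL hx.finite ha₁ ha
  have haR : (R - 2) * a < R * e := hmono.lt_iff_lt.1 (by rwa [ha, ← mul_nsmul'] at hslope)
  obtain ⟨r, rfl⟩ := Nat.exists_eq_add_of_le' (show 2 ≤ R by omega)
  rw [Nat.add_sub_cancel] at haR
  have : e ≤ r := by omega
  have : e + 2 ≤ a := by omega
  nlinarith

theorem ViolatesLojasiewicz.aeval_ne_zero {K : Type*} [Field K] [LinearOrder K]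
    [IsStrictOrderedRing K] [Algebra ℝ K] {k R : ℕ} {f Q : MvPolynomial (Fin 2) ℝ}
    {x : Fin 2 → K} (hx : ViolatesLojasiewicz R f x) (hk : 2 ≤ k) (hf : f.totalDegree ≤ k)
    (hR : k * (3 * k - 4) ≤ R) (hQ : Q.totalDegree ≤ 3 * k - 4) (hQ₀ : Q ≠ 0) :
    aeval x Q ≠ 0 := by
  intro hQx
  obtain ⟨L, hxL, π, hπ, e, he, heR, hfe⟩ := exists_isUniformizer_of_aeval_eq_zero (by omega)
    (by omega) hf hQ hx.pos.ne' hx.infinitesimal hQ₀ hQx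
  have hlt : (2 * R - 2) * e < R * (2 * e - 2) :=
    (strictMono_nsmul_mk hπ.ne_zero hπ.mk_pos).lt_iff_lt.1 <|
      calc ((2 * R - 2) * e) • ArchimedeanClass.mk π
          = (2 * R - 2) • ArchimedeanClass.mk (aeval x f) := by rw [hfe, mul_nsmul']
        _ < R • ArchimedeanClass.mk (aeval x (gradSq f)) := hx.lt
        _ ≤ R • (2 * e - 2) • ArchimedeanClass.mk π :=
          nsmul_le_nsmul_right (hπ.mk_aeval_gradSq_le hxL hx.finite he hfe) R
        _ = (R * (2 * e - 2)) • ArchimedeanClass.mk π := (mul_nsmul' ..).symm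
  obtain ⟨r, rfl⟩ := Nat.exists_eq_add_of_le' (show 1 ≤ R by nlinarith)
  obtain ⟨e, rfl⟩ := Nat.exists_eq_add_of_le' he
  rw [show 2 * (r + 1) - 2 = 2 * r by omega, show 2 * (e + 1) - 2 = 2 * e by omega] at hlt
  nlinarith

theorem totalDegree_pderiv_gradSq_mul_sub_le {R σ : Type*} [CommRing R] [Fintype σ]
    (f : MvPolynomial σ R) (i j : σ) :
    (pderiv i (gradSq f) * pderiv j f - pderiv j (gradSq f) * pderiv i f).totalDegree ≤
      3 * f.totalDegree - 4 := by
  have hf (l : σ) := totalDegree_pderiv_le l f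
  have hG (l : σ) : (pderiv l (gradSq f)).totalDegree ≤ 2 * (f.totalDegree - 1) - 1 :=
    (totalDegree_pderiv_le l _).trans (by have := totalDegree_gradSq_le f; omega)
  refine (totalDegree_sub _ _).trans (max_le ?_ ?_) <;>
    exact (totalDegree_mul _ _).trans ((add_le_add (hG _) (hf _)).trans (by omega))

theorem not_violatesLojasiewicz_fin_two {k R : ℕ} {f : MvPolynomial (Fin 2) ℝ} (hk : 2 ≤ k)
    (hf : f.totalDegree ≤ k) (hR : k * (3 * k - 4) ≤ R)
    (hreal : ∀ x : Fin 2 → ℝ*, ViolatesLojasiewicz R f x → ∀ j (s : ℝ), x j ≠ algebraMap ℝ ℝ* s)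
    (z : Fin 2 → ℝ*) : ¬ ViolatesLojasiewicz R f z := by
  intro hz
  have hR₄ : 4 ≤ R := le_trans (Nat.mul_le_mul hk (by omega : 2 ≤ 3 * k - 4)) hR
  have hGz := aeval_gradSq_ne_zero_of_forall_ne_algebraMap (by omega) hreal hz.finite hz.pos
    hz.infinitesimal
  obtain ⟨j, hj⟩ : ∃ j, pderiv j f ≠ 0 := by
    by_contra! h
    simp [gradSq, h] at hGz
  obtain ⟨i, hij⟩ := exists_ne j
  obtain ⟨τ, hτ₀, -, hext⟩ := hz.exists_extremal hR₄ hreal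
  obtain ⟨J, hJ⟩ : ∃ J, J = pderiv i (gradSq f) * pderiv j f - pderiv j (gradSq f) * pderiv i f :=
    ⟨_, rfl⟩
  have hJx {x ζ : Fin 2 → ℝ*}
      (hx : ∀ l, τ * aeval x (pderiv l f) - aeval x (pderiv l (gradSq f)) = ζ l) :
      aeval x J = ζ j * aeval x (pderiv i f) - ζ i * aeval x (pderiv j f) := by
    simp only [hJ, map_sub, map_mul, ← hx]
    ring
  by_cases hJ₀ : J = 0
  · obtain ⟨x, hx, -, -, hcrit⟩ := hext (Pi.single i (τ ^ 4)) fun l => by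
      obtain rfl | hl := eq_or_ne l i
      · simp
      · simp [hl]
    have hτj : τ ^ 4 * aeval x (pderiv j f) = 0 := by simpa [hJ₀, hij.symm] using hJx hcrit
    exact hx.aeval_ne_zero hk hf hR ((totalDegree_pderiv_le j f).trans (by omega)) hj
      ((mul_eq_zero_iff_left (pow_ne_zero 4 hτ₀.ne')).1 hτj)
  · obtain ⟨x, hx, -, -, hcrit⟩ := hext 0 (by simp)
    refine hx.aeval_ne_zero hk hf hR ?_ hJ₀ (by simpa using hJx hcrit)
    exact hJ ▸ (totalDegree_pderiv_gradSq_mul_sub_le f i j).trans (by omega)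

theorem not_violatesLojasiewicz {k : ℕ} (hk : 2 ≤ k) {m R : ℕ} (hR : lojasiewiczDenom k m ≤ R)
    {f : MvPolynomial (Fin m) ℝ} (hf : f.totalDegree ≤ k) (x : Fin m → ℝ*) :
    ¬ ViolatesLojasiewicz R f x := by
  induction m with
  | zero =>
    intro hx
    obtain ⟨c, rfl⟩ := C_surjective (R := ℝ) (Fin 0) f
    have hc := hx.pos.ne'
    have hpos := hx.infinitesimal
    rw [aeval_C] at hc hpos
    exact hpos.ne' (mk_algebraMap_real (by simpa using hc))
  | succ m ih =>
    have hreal (x : Fin (m + 1) → ℝ*) (hx : ViolatesLojasiewicz R f x) (j : Fin (m + 1)) (s : ℝ) :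
        x j ≠ algebraMap ℝ ℝ* s := fun hj => by
      obtain ⟨g, hgf, hg⟩ := hx.exists_restrict hj
      exact ih ((lojasiewiczDenom_mono hk m.le_succ).trans hR) (hgf.trans hf) _ hg
    obtain hm | hm := eq_or_ne (m + 1) 2
    · obtain rfl : m = 1 := by omega
      exact not_violatesLojasiewicz_fin_two hk hf ((mul_le_lojasiewiczDenom_two k).trans hR) hreal x
    · exact not_violatesLojasiewicz_of_forall_ne_algebraMap hk hf
        ((pow_add_two_le_lojasiewiczDenom hk m.succ_pos hm).trans hR)
        ((four_le_lojasiewiczDenom hk _).trans hR) hreal x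

end NoViolation

section PolynomialLojasiewicz

open ArchimedeanClass MvPolynomial

theorem eval_gradSq {R σ : Type*} [CommSemiring R] [Fintype σ] (f : MvPolynomial σ R) (x : σ → R) :
    eval x (gradSq f) = ∑ j, eval x (pderiv j f) ^ 2 := by
  simp only [gradSq, map_sum, map_pow]

theorem mk_ofSeq_lt_mk_ofSeq {u v : ℕ → ℝ} (h : ∀ i : ℕ, ((i : ℝ) + 1) * |v i| < |u i|) :
    mk (Hyperreal.ofSeq u) < mk (Hyperreal.ofSeq v) := by
  refine mk_lt_mk.2 fun N =>
    (Hyperreal.ofSeq_lt_ofSeq (f := fun i => N • |v i|) (g := fun i => |u i|)).2 ?_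
  refine ((eventually_ge_atTop N).filter_mono Nat.hyperfilter_le_atTop).mono fun i hi => ?_
  have hN : (N : ℝ) ≤ i + 1 := by exact_mod_cast hi.trans i.le_succ
  rw [nsmul_eq_mul]
  exact (mul_le_mul_of_nonneg_right hN (abs_nonneg _)).trans_lt (h i)

theorem exists_mul_eval_pow_le_eval_gradSq_pow {k d : ℕ} (hk : 2 ≤ k)
    {f : MvPolynomial (Fin d) ℝ} (hf : f.totalDegree ≤ k) {a : Fin d → ℝ} (ha : eval a f = 0) :
    ∃ c > 0, ∀ᶠ y in 𝓝 a, 0 ≤ eval y f →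
      c * eval y f ^ (2 * lojasiewiczDenom k d - 2) ≤
        eval y (gradSq f) ^ lojasiewiczDenom k d := by
  obtain ⟨R, hR⟩ : ∃ R, R = lojasiewiczDenom k d := ⟨_, rfl⟩
  have hR₄ : 4 ≤ R := hR ▸ four_le_lojasiewiczDenom hk d
  rw [← hR]
  by_contra! h
  choose u hu hua using fun i : ℕ =>
    ((h (1 / ((i : ℝ) + 1)) Nat.one_div_pos_of_nat).and_eventually
      (Metric.ball_mem_nhds a (Nat.one_div_pos_of_nat (n := i) (α := ℝ)))).exists
  have hua : Tendsto u atTop (𝓝 a) := tendsto_iff_dist_tendsto_zero.2 <|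
    squeeze_zero (fun _ => dist_nonneg) (fun i => (hua i).le)
      tendsto_one_div_add_atTop_nhds_zero_nat
  have hG (i : ℕ) : 0 ≤ eval (u i) (gradSq f) ^ R :=
    pow_nonneg (eval_gradSq f (u i) ▸ Finset.sum_nonneg fun _ _ => sq_nonneg _) R
  have hpos (i : ℕ) : 0 < eval (u i) f := (hu i).1.lt_of_ne' fun h₀ => by
    have := (hG i).trans_lt (hu i).2
    simp [h₀, show 2 * R - 2 ≠ 0 by omega] at this
  refine not_violatesLojasiewicz hk hR.ge hf (fun j => Hyperreal.ofSeq fun i => u i j)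
    ⟨fun j => mk_ofSeq_nonneg_of_tendsto (tendsto_pi_nhds.1 hua j), ?_, ?_, ?_⟩
  · rw [aeval_hyperreal_ofSeq]
    exact (Hyperreal.ofSeq_lt_ofSeq (f := fun _ => 0)).2 (.of_forall hpos)
  · rw [aeval_hyperreal_ofSeq]
    exact mk_ofSeq_pos_of_tendsto_zero (ha ▸ ((MvPolynomial.continuous_eval f).tendsto a).comp hua)
  · rw [aeval_hyperreal_ofSeq, aeval_hyperreal_ofSeq, ← mk_pow, ← mk_pow]
    refine mk_ofSeq_lt_mk_ofSeq (u := fun i => eval (u i) f ^ (2 * R - 2))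
      (v := fun i => eval (u i) (gradSq f) ^ R) fun i => ?_
    have hlt := (hu i).2
    rwa [one_div_mul_eq_div, lt_div_iff₀' (by positivity),
      ← abs_of_nonneg (hG i), ← abs_of_pos (pow_pos (hpos i) _)] at hlt

end PolynomialLojasiewicz

section Gradient

open MvPolynomial

variable {d : ℕ}

theorem continuous_eval_ofLp (p : MvPolynomial (Fin d) ℝ) :
    Continuous fun y : Euc d => eval (fun j => y j) p :=
  (MvPolynomial.continuous_eval p).comp (by fun_prop)

theorem hasGradientAt_eval (p : MvPolynomial (Fin d) ℝ) (y : Euc d) :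
    HasGradientAt (fun y : Euc d => eval (fun j => y j) p)
      (WithLp.toLp 2 fun j => eval (fun j => y j) (pderiv j p)) y := by
  rw [hasGradientAt_iff_hasFDerivAt]
  refine ((hasFDerivAt_mvPolynomial_eval p fun j => y j).comp y
    (EuclideanSpace.equiv (Fin d) ℝ : Euc d →L[ℝ] Fin d → ℝ).hasFDerivAt).congr_fderiv ?_
  ext v
  simp [PiLp.inner_apply, mul_comm]

theorem norm_toLp_eval_pderiv_sq (p : MvPolynomial (Fin d) ℝ) (x : Fin d → ℝ) :
    ‖WithLp.toLp 2 fun j => eval x (pderiv j p)‖ ^ 2 = eval x (gradSq p) := by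
  simp [EuclideanSpace.norm_sq_eq, eval_gradSq]

end Gradient

section LojasiewiczAtWith

variable {d : ℕ} {f : Euc d → ℝ} {S T : Set (Euc d)} {ybar : Euc d} {θ : ℝ}

theorem LojasiewiczAtWith.union (hS : LojasiewiczAtWith d f S ybar θ)
    (hT : LojasiewiczAtWith d f T ybar θ) : LojasiewiczAtWith d f (S ∪ T) ybar θ := by
  obtain ⟨ε, hε, c, hc, hS⟩ := hS
  obtain ⟨ε', hε', c', hc', hT⟩ := hT
  refine ⟨min ε ε', lt_min hε hε', min c c', lt_min hc hc', fun y hy hyε hfy => ?_⟩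
  have hrpow := Real.rpow_nonneg hfy θ
  obtain ⟨hyε, hyε'⟩ := lt_min_iff.1 hyε
  obtain hy | hy := hy
  · exact (mul_le_mul_of_nonneg_right (min_le_left c c') hrpow).trans (hS y hy hyε hfy)
  · exact (mul_le_mul_of_nonneg_right (min_le_right c c') hrpow).trans (hT y hy hyε' hfy)

theorem lojasiewiczAtWith_empty : LojasiewiczAtWith d f ∅ ybar θ :=
  ⟨1, one_pos, 1, one_pos, fun _ hy => hy.elim⟩

theorem lojasiewiczAtWith_biUnion {ι : Type*} (s : Finset ι) {V : ι → Set (Euc d)}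
    (hV : ∀ i ∈ s, LojasiewiczAtWith d f (V i) ybar θ) :
    LojasiewiczAtWith d f (⋃ i ∈ s, V i) ybar θ := by
  classical
  induction s using Finset.induction_on with
  | empty => simpa using lojasiewiczAtWith_empty
  | insert i s _ ih =>
    rw [Finset.set_biUnion_insert]
    exact (hV i (s.mem_insert_self i)).union (ih fun j hj => hV j (Finset.mem_insert_of_mem hj))

theorem lojasiewiczAtWith_of_notMem (hS : IsClosed S) (h : ybar ∉ S) :
    LojasiewiczAtWith d f S ybar θ := by
  obtain ⟨ε, hε, hball⟩ := Metric.isOpen_iff.1 hS.isOpen_compl ybar h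
  exact ⟨ε, hε, 1, one_pos, fun y hy hyε =>
    absurd hy (hball (by rwa [Metric.mem_ball, dist_comm, dist_eq_norm]))⟩

end LojasiewiczAtWith

section PiecewisePolynomial

open MvPolynomial

variable {d k : ℕ} {F G : Euc d → ℝ}

/-- Piecewise polynomial functions of degree at most `k` on finitely many pieces. Only the finite
set of polynomials is recorded: the pieces may be taken to be the sets on which `F` agrees with
each of them. -/
def IsPiecewisePolynomial (k : ℕ) (F : Euc d → ℝ) : Prop :=
  ∃ s : Finset (MvPolynomial (Fin d) ℝ), (∀ p ∈ s, p.totalDegree ≤ k) ∧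
    ∀ y, ∃ p ∈ s, F y = eval (fun j => y j) p

namespace IsPiecewisePolynomial

theorem of_iUnion_eq_univ {ι : Type*} [Finite ι] {S : ι → Set (Euc d)}
    {p : ι → MvPolynomial (Fin d) ℝ} (hS : ⋃ l, S l = univ) (hp : ∀ l, (p l).totalDegree ≤ k)
    (hF : ∀ l, ∀ y ∈ S l, F y = eval (fun j => y j) (p l)) : IsPiecewisePolynomial k F := by
  classical
  cases nonempty_fintype ι
  refine ⟨Finset.univ.image p, by simpa using hp, fun y => ?_⟩
  obtain ⟨l, hl⟩ := mem_iUnion.1 (hS ▸ mem_univ y)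
  exact ⟨p l, Finset.mem_image_of_mem p (Finset.mem_univ l), hF l y hl⟩

theorem zero : IsPiecewisePolynomial k (0 : Euc d → ℝ) :=
  ⟨{0}, by simp, by simp⟩

theorem add (hF : IsPiecewisePolynomial k F) (hG : IsPiecewisePolynomial k G) :
    IsPiecewisePolynomial k (F + G) := by
  classical
  obtain ⟨s, hs, hF⟩ := hF
  obtain ⟨t, ht, hG⟩ := hG
  refine ⟨Finset.image₂ (· + ·) s t, ?_, fun y => ?_⟩
  · rw [Finset.forall_mem_image₂]
    exact fun p hp q hq => (totalDegree_add p q).trans (max_le (hs p hp) (ht q hq))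
  · obtain ⟨p, hp, hFp⟩ := hF y
    obtain ⟨q, hq, hGq⟩ := hG y
    exact ⟨p + q, Finset.mem_image₂_of_mem hp hq, by rw [Pi.add_apply, hFp, hGq, map_add]⟩

theorem sum {ι : Type*} {s : Finset ι} {F : ι → Euc d → ℝ}
    (hF : ∀ i ∈ s, IsPiecewisePolynomial k (F i)) : IsPiecewisePolynomial k (∑ i ∈ s, F i) :=
  Finset.sum_induction F (IsPiecewisePolynomial k) (fun _ _ => add) zero hF

theorem const_mul (hF : IsPiecewisePolynomial k F) (c : ℝ) :
    IsPiecewisePolynomial k fun y => c * F y := by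
  classical
  obtain ⟨s, hs, hF⟩ := hF
  refine ⟨s.image (C c * ·), ?_, fun y => ?_⟩
  · rw [Finset.forall_mem_image]
    exact fun p hp => (totalDegree_mul _ _).trans (by simpa using hs p hp)
  · obtain ⟨p, hp, hFp⟩ := hF y
    exact ⟨C c * p, Finset.mem_image_of_mem _ hp, by simp [hFp]⟩

theorem comp_smul_sub (hF : IsPiecewisePolynomial k F) (r : ℝ) (a : Euc d) :
    IsPiecewisePolynomial k fun y => F (r • (y - a)) := by
  classical
  obtain ⟨s, hs, hF⟩ := hF
  obtain ⟨φ, hφ⟩ : ∃ φ : Fin d → MvPolynomial (Fin d) ℝ, φ = fun j => C r * (X j - C (a j)) :=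
    ⟨_, rfl⟩
  have hφ₁ (j : Fin d) : (φ j).totalDegree ≤ 1 := by
    refine hφ ▸ (totalDegree_mul _ _).trans ?_
    simpa using totalDegree_sub (X j) (C (a j) : MvPolynomial (Fin d) ℝ)
  refine ⟨s.image (aeval φ), ?_, fun y => ?_⟩
  · rw [Finset.forall_mem_image]
    exact fun p hp => (totalDegree_aeval_le hφ₁ p).trans (hs p hp)
  · obtain ⟨p, hp, hFp⟩ := hF (r • (y - a))
    refine ⟨aeval φ p, Finset.mem_image_of_mem _ hp, ?_⟩
    change F (r • (y - a)) = _
    rw [hFp, ← aeval_eq_eval, ← aeval_eq_eval, comp_aeval_apply (R := ℝ) φ (aeval (R := ℝ) _)]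
    simp [hφ]

theorem kde (hF : IsPiecewisePolynomial k F) {n : ℕ} (x : Fin n → Euc d) (h : ℝ) :
    IsPiecewisePolynomial k (KDE d n F x h) := by
  convert (sum fun i (_ : i ∈ Finset.univ) => hF.comp_smul_sub h⁻¹ (x i)).const_mul
    (1 / ((n : ℝ) * h ^ d)) using 2 with y
  simp [KDE]

end IsPiecewisePolynomial

theorem contDiff_kde {K : Euc d → ℝ} (hK : ContDiff ℝ 1 K) {n : ℕ} (x : Fin n → Euc d) (h : ℝ) :
    ContDiff ℝ 1 (KDE d n K x h) := by
  unfold KDE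
  fun_prop

theorem continuous_gradient (hF : ContDiff ℝ 1 F) : Continuous (gradient F) :=
  (InnerProductSpace.toDual ℝ (Euc d)).symm.continuous.comp (hF.continuous_fderiv one_ne_zero)

theorem gradient_eq_of_mem_closure_interior {p : MvPolynomial (Fin d) ℝ} (hF : ContDiff ℝ 1 F)
    {y : Euc d} (hy : y ∈ closure (interior {y | F y = eval (fun j => y j) p})) :
    gradient F y = WithLp.toLp 2 fun j => eval (fun j => y j) (pderiv j p) := by
  refine closure_minimal (t := {y : Euc d | gradient F y =
    WithLp.toLp 2 fun j => eval (fun j => y j) (pderiv j p)}) (fun z hz => ?_) ?_ hy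
  · have hFz : F =ᶠ[𝓝 z] fun y : Euc d => eval (fun j => y j) p :=
      mem_interior_iff_mem_nhds.1 hz
    exact ((hasGradientAt_eval p z).congr_of_eventuallyEq hFz).gradient
  · exact isClosed_eq (continuous_gradient hF) ((PiLp.continuous_toLp 2 _).comp
      (continuous_pi fun j => continuous_eval_ofLp _))

theorem biUnion_closure_interior_eq_univ {X ι : Type*} [TopologicalSpace X] [BaireSpace X]
    {s : Finset ι} {A : ι → Set X} (hA : ∀ i ∈ s, IsClosed (A i)) (hs : ⋃ i ∈ s, A i = univ) :
    ⋃ i ∈ s, closure (interior (A i)) = univ := by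
  have hdense : Dense (⋃ i ∈ s, interior (A i)) := by
    simpa only [iUnion_subtype] using dense_iUnion_interior_of_closed
      (fun i : s => hA i i.2) (by simpa only [iUnion_subtype] using hs)
  rw [← s.closure_biUnion, hdense.closure_eq]

theorem rpow_mul_rpow_le_of_mul_pow_le {c u g : ℝ} {R : ℕ} (hc : 0 ≤ c) (hu : 0 ≤ u)
    (hg : 0 ≤ g) (hR : 0 < R) (h : c * u ^ (2 * R - 2) ≤ (g ^ 2) ^ R) :
    c ^ ((2 * R : ℕ) : ℝ)⁻¹ * u ^ (1 - 1 / (R : ℝ)) ≤ g := by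
  have hR₀ : (R : ℝ) ≠ 0 := Nat.cast_ne_zero.2 hR.ne'
  refine le_of_pow_le_pow_left₀ (n := 2 * R) (by omega) hg ?_
  calc (c ^ ((2 * R : ℕ) : ℝ)⁻¹ * u ^ (1 - 1 / (R : ℝ))) ^ (2 * R) = c * u ^ (2 * R - 2) := by
        rw [mul_pow, Real.rpow_inv_natCast_pow hc (by omega), ← Real.rpow_mul_natCast hu,
          ← Real.rpow_natCast u (2 * R - 2), Nat.cast_sub (by omega)]
        congr 2
        push_cast
        field_simp
    _ ≤ g ^ (2 * R) := by rwa [pow_mul]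

theorem lojasiewiczAtWith_closure_interior (hk : 2 ≤ k) (hF : ContDiff ℝ 1 F)
    {p : MvPolynomial (Fin d) ℝ} (hp : p.totalDegree ≤ k) (ybar : Euc d) :
    LojasiewiczAtWith d F (closure (interior {y | F y = eval (fun j => y j) p})) ybar
      (1 - 1 / (lojasiewiczDenom k d : ℝ)) := by
  have hFp {y : Euc d} (hy : y ∈ closure (interior {y | F y = eval (fun j => y j) p})) :
      F y = eval (fun j => y j) p :=
    closure_minimal interior_subset (isClosed_eq hF.continuous (continuous_eval_ofLp p)) hy
  by_cases hybar : ybar ∈ closure (interior {y | F y = eval (fun j => y j) p})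
  swap
  · exact lojasiewiczAtWith_of_notMem isClosed_closure hybar
  obtain ⟨c, hc, hloc⟩ := exists_mul_eval_pow_le_eval_gradSq_pow hk
    (f := C (F ybar) - p) (a := fun j => ybar j)
    ((totalDegree_sub _ _).trans (max_le (by simp) hp)) (by simp [hFp hybar])
  have hcont : Continuous fun (y : Euc d) j => y j := by fun_prop
  obtain ⟨ε, hε, hball⟩ := Metric.eventually_nhds_iff.1 ((hcont.tendsto ybar).eventually hloc)
  refine ⟨ε, hε, _, Real.rpow_pos_of_pos hc _, fun y hy hyε hFy =>
    rpow_mul_rpow_le_of_mul_pow_le hc.le hFy (norm_nonneg _)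
      (four_pos.trans_le (four_le_lojasiewiczDenom hk d)) ?_⟩
  have heval : eval (fun j => y j) (C (F ybar) - p) = F ybar - F y := by simp [hFp hy]
  have hgrad : gradSq (C (F ybar) - p) = gradSq p := by simp [gradSq]
  have hineq := hball (by rwa [dist_comm, dist_eq_norm]) (heval ▸ hFy)
  rwa [heval, hgrad, ← norm_toLp_eval_pderiv_sq,
    ← gradient_eq_of_mem_closure_interior hF hy] at hineq

theorem loja_exponent_bound_piecewise_poly_general (hk : 2 ≤ k) (hF : ContDiff ℝ 1 F)
    (hFk : IsPiecewisePolynomial k F) (ybar : Euc d) :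
    LojasiewiczAtWith d F univ ybar (1 - 1 / (lojasiewiczDenom k d : ℝ)) := by
  obtain ⟨s, hs, hFs⟩ := hFk
  rw [← biUnion_closure_interior_eq_univ (s := s)
    (A := fun p => {y : Euc d | F y = eval (fun j => y j) p})
    (fun p _ => isClosed_eq hF.continuous (continuous_eval_ofLp p))
    (eq_univ_of_forall fun y => by simpa using hFs y)]
  exact lojasiewiczAtWith_biUnion s fun p hp =>
    lojasiewiczAtWith_closure_interior hk hF (hs p hp) ybar

end PiecewisePolynomial

/-- Bound of the Łojasiewicz exponent for piecewise polynomial kernels: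
if the kernel `K` is `C¹` and piecewise polynomial with maximum degree `k ≥ 2` (partition
`{S l}` with polynomials `p l`, degree `k` attained), `ȳ` is a critical point of the KDE `f`,
and `{T m}` is a finite partition with polynomials `fp m` such that `f = fp m` on `T m` and
every `fp m` whose piece `T m` meets every `ε`-neighborhood of `ȳ` is non-constant, then `f`
satisfies the Łojasiewicz inequality at `ȳ` with exponent
`θ = 1 − 1/max{k(3k−4)^{d−1}, 2k(3k−3)^{d−2}}`. -/
theorem loja_exponent_bound_piecewise_poly
    (d n : ℕ) (hd : 0 < d) (hn : 0 < n)
    (K : Euc d → ℝ) (x : Fin n → Euc d) (h : ℝ) (hh : 0 < h)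
    (hK1 : ContDiff ℝ 1 K)
    (k L : ℕ) (hk : 2 ≤ k)
    (S : Fin L → Set (Euc d)) (p : Fin L → MvPolynomial (Fin d) ℝ)
    (hSne : ∀ l, (S l).Nonempty)
    (hSdisj : ∀ l l', l ≠ l' → Disjoint (S l) (S l'))
    (hScover : (⋃ l, S l) = Set.univ)
    (hagree : ∀ l, ∀ z ∈ S l, K z = MvPolynomial.eval (fun j => z j) (p l))
    (hdeg : ∀ l, (p l).totalDegree ≤ k)
    (hdeg_attained : ∃ l, (p l).totalDegree = k)
    (ybar : Euc d) (hcrit : gradient (KDE d n K x h) ybar = 0)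
    (M : ℕ) (T : Fin M → Set (Euc d)) (fp : Fin M → MvPolynomial (Fin d) ℝ)
    (hTne : ∀ m, (T m).Nonempty)
    (hTdisj : ∀ m m', m ≠ m' → Disjoint (T m) (T m'))
    (hTcover : (⋃ m, T m) = Set.univ)
    (hTagree : ∀ m, ∀ z ∈ T m, KDE d n K x h z = MvPolynomial.eval (fun j => z j) (fp m))
    (hnonconst : ∀ m, (∀ ε : ℝ, 0 < ε → (T m ∩ Metric.ball ybar ε).Nonempty) →
        ¬ ∃ c : ℝ, ∀ z : Fin d → ℝ, MvPolynomial.eval z (fp m) = c) :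
    ∃ c : ℝ, 0 < c ∧ ∃ ε : ℝ, 0 < ε ∧
      ∀ z : Euc d, ‖ybar - z‖ < ε → 0 ≤ KDE d n K x h ybar - KDE d n K x h z →
        ‖gradient (KDE d n K x h) z‖ ≥
          c * (KDE d n K x h ybar - KDE d n K x h z) ^
            (1 - 1 / ((max (k * (3 * k - 4) ^ (d - 1)) (2 * k * (3 * k - 3) ^ (d - 2)) : ℕ) : ℝ)) := by
  have hK : IsPiecewisePolynomial k K := .of_iUnion_eq_univ hScover hdeg hagree
  obtain ⟨ε, hε, c, hc, hloj⟩ :=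
    loja_exponent_bound_piecewise_poly_general hk (contDiff_kde hK1 x h) (hK.kde x h) ybar
  exact ⟨c, hc, ε, hε, fun z => hloj z (mem_univ z)⟩
end
end
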